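/- arXiv:0804.2032 — 3 statements merged into one kernel-verified Lean document; each statement's English description precedes it below -/
import Mathlib

section
/- Let D be a digraph with a vertex r such that R_D(r) = V(D). An arc (u,v) of D with R_D(v) ≠ V(D) is not useless if and only if there is a dipath in D starting at r whose last arc is (u,v). -/
/-- A (finite, loopless) directed graph, given by its vertex set and arc set. -/
structure DirGraph (V : Type) where
  verts : Set V
  arcs : Set (V × V)

namespace DirGraph

variable {V : Type}

/-- Every arc joins two distinct vertices of the digraph. -/
def WellFormed (D : DirGraph V) : Prop :=
  ∀ a ∈ D.arcs, a.1 ∈ D.verts ∧ a.2 ∈ D.verts ∧ a.1 ≠ a.2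

/-- `T` is a subgraph of `D`. -/
def IsSubgraph (T D : DirGraph V) : Prop :=
  T.verts ⊆ D.verts ∧ T.arcs ⊆ D.arcs

/-- The in-degree of a vertex. -/
noncomputable def inDeg (D : DirGraph V) (v : V) : ℕ :=
  {a ∈ D.arcs | a.2 = v}.ncard

/-- The out-degree of a vertex. -/
noncomputable def outDeg (D : DirGraph V) (v : V) : ℕ :=
  {a ∈ D.arcs | a.1 = v}.ncard

/-- A dipath in `D`: a nonempty list of distinct vertices of `D`,
consecutive ones being joined by arcs of `D`. -/
def IsDipath (D : DirGraph V) (l : List V) : Prop :=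
  l ≠ [] ∧ l.Nodup ∧ (∀ v ∈ l, v ∈ D.verts) ∧
    l.Chain' (fun u v => (u, v) ∈ D.arcs)

/-- `v` is reachable from `u` by a dipath of `D` (in particular,
every vertex of `D` reaches itself). -/
def Reaches (D : DirGraph V) (u v : V) : Prop :=
  ∃ l : List V, D.IsDipath l ∧ l.head? = some u ∧ l.getLast? = some v

/-- `R_D(u)`: the set of vertices reachable from `u` in `D`. -/
def reachSet (D : DirGraph V) (u : V) : Set V := {v | D.Reaches u v}

/-- `T` is an out-tree with root `r`: `r` is the only vertex of in-degree 0,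
every other vertex has in-degree 1, and the underlying graph is a tree
(equivalently, under the degree conditions, every vertex is reachable from `r`). -/
structure IsOutTree (T : DirGraph V) (r : V) : Prop where
  arcs_mem : ∀ a ∈ T.arcs, a.1 ∈ T.verts ∧ a.2 ∈ T.verts
  root_mem : r ∈ T.verts
  root_indeg : T.inDeg r = 0
  indeg_one : ∀ v ∈ T.verts, v ≠ r → T.inDeg v = 1
  reach_root : ∀ v ∈ T.verts, T.Reaches r v

/-- `T` is an out-tree of the digraph `D`, with root `r`. -/
def IsOutTreeOf (T D : DirGraph V) (r : V) : Prop :=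
  T.IsOutTree r ∧ T.IsSubgraph D

/-- `T` is an out-branching (spanning out-tree) of `D`, with root `r`. -/
def IsOutBranching (T D : DirGraph V) (r : V) : Prop :=
  T.IsOutTreeOf D r ∧ T.verts = D.verts

/-- `Leaf(T)`: the vertices of out-degree 0. -/
def leaves (T : DirGraph V) : Set V := {v ∈ T.verts | T.outDeg v = 0}

/-- `Branch(T)`: the vertices of out-degree at least 2. -/
def branchVerts (T : DirGraph V) : Set V := {v ∈ T.verts | 2 ≤ T.outDeg v}

/-- `BrSucc(T)`: the vertices whose in-neighbor in `T` is a branch vertex. -/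
def brSucc (T : DirGraph V) : Set V := {v | ∃ u, (u, v) ∈ T.arcs ∧ 2 ≤ T.outDeg u}

/-- `Head(B)`: the set of heads of the arcs in `B`. -/
def heads (B : Set (V × V)) : Set V := Prod.snd '' B

/-- `Back_D^T(z) = {(u,v) ∈ A(D) : v ≺_T z ⪯_T u}`. -/
def backArcs (D T : DirGraph V) (z : V) : Set (V × V) :=
  {a ∈ D.arcs | (T.Reaches a.2 z ∧ a.2 ≠ z) ∧ T.Reaches z a.1}

/-- The 1-change for `(u,v)`: add the arc `(u,v)` and delete the arc of `T`
with head `v`. -/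
def oneChange (T : DirGraph V) (u v : V) : DirGraph V :=
  ⟨T.verts, {a ∈ T.arcs | a.2 ≠ v} ∪ {(u, v)}⟩

/-- `ℓ(D)`: the maximum number of leaves over all out-trees of `D`. -/
noncomputable def ell (D : DirGraph V) : ℕ :=
  sSup {k | ∃ (T : DirGraph V) (r : V), IsOutTreeOf T D r ∧ (leaves T).ncard = k}

/-- `ℓ_s(D)`: the maximum number of leaves over all out-branchings of `D`. -/
noncomputable def ellS (D : DirGraph V) : ℕ :=
  sSup {k | ∃ (T : DirGraph V) (r : V), IsOutBranching T D r ∧ (leaves T).ncard = k}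

/-- An arc is useless if no out-branching of `D` contains it. -/
def Useless (D : DirGraph V) (a : V × V) : Prop :=
  ∀ (T : DirGraph V) (r : V), IsOutBranching T D r → a ∉ T.arcs

/-- `T` is a 1-optimal out-branching of `D`: no 1-change for an arc of
`A(D) \ A(T)` results in an out-branching with more leaves. -/
def IsOneOptimal (T D : DirGraph V) (r : V) : Prop :=
  IsOutBranching T D r ∧
    ∀ u v : V, (u, v) ∈ D.arcs → (u, v) ∉ T.arcs → v ≠ r →
      ∀ r' : V, IsOutBranching (oneChange T u v) D r' →
        (leaves (oneChange T u v)).ncard ≤ (leaves T).ncard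

/-- `(X, U)` is a tree decomposition of the digraph `D`: `U` is a tree,
every vertex of `D` is in some bag, both endpoints of every arc are in a
common bag, and for every vertex the set of nodes whose bags contain it
induces a subtree (a connected subgraph) of `U`. -/
structure IsTreeDecomp {ι : Type} (D : DirGraph V) (U : SimpleGraph ι) (X : ι → Set V) :
    Prop where
  tree : U.IsTree
  mem_bag : ∀ v ∈ D.verts, ∃ i, v ∈ X i
  arc_bag : ∀ a ∈ D.arcs, ∃ i, a.1 ∈ X i ∧ a.2 ∈ X i
  bag_connected : ∀ (v : V) (i j : ι), v ∈ X i → v ∈ X j →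
    Relation.ReflTransGen (fun x y => U.Adj x y ∧ v ∈ X x ∧ v ∈ X y) i j

/-- The underlying undirected graph of `T`, on the vertex set of `T`. -/
def underlying (T : DirGraph V) : SimpleGraph {v // v ∈ T.verts} :=
  SimpleGraph.fromRel fun a b => ((a : V), (b : V)) ∈ T.arcs

/-- The bag `X_v = {u, v} ∪ BrSucc(T) ∪ Leaf(T) ∪ Head(Back_D^T(v))`,
where `u` is the in-neighbor of `v` in `T` (omitted when `v` is the root). -/
def bag (D T : DirGraph V) (v : V) : Set V :=
  {u | (u, v) ∈ T.arcs} ∪ {v} ∪ brSucc T ∪ leaves T ∪ heads (backArcs D T v)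

/-- The set of arcs of a dipath given as a list of vertices. -/
def listArcs (l : List V) : Set (V × V) := {a | a ∈ l.zip l.tail}

end DirGraph

namespace DirGraph

/-!
An out-branching containing `(u, v)` is rooted at some `r'` that `v` does not reach in `D`, because
otherwise `v` would reach everything. Hence every dipath from `r` to `r'` avoids `v`, and so does
the path from `r'` to `u` inside the branching: joining them, `r` reaches `u` in `D - v`, and the
arc `(u, v)` completes the dipath. Conversely, if `r` reaches `u` in `D - v`, then `r` still reaches
every vertex after all arcs into `v` other than `(u, v)` are deleted, and every out-branching
rooted at `r` of the resulting digraph has to enter `v` through `(u, v)`.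
-/

section

variable {V : Type} {D T : DirGraph V} {a b c r u v w x : V} {l : List V}

/-- The adjacency relation of a digraph. A `DirGraph` may carry arcs with an end outside its vertex
set; dipaths never use them, so both ends are required to be vertices. -/
def Adj (D : DirGraph V) (u v : V) : Prop :=
  u ∈ D.verts ∧ v ∈ D.verts ∧ (u, v) ∈ D.arcs

theorem Adj.mono (h : T.IsSubgraph D) (huv : T.Adj u v) : D.Adj u v :=
  ⟨h.1 huv.1, h.1 huv.2.1, h.2 huv.2.2⟩

theorem IsSubgraph.trans {S : DirGraph V} (hST : S.IsSubgraph T) (hTD : T.IsSubgraph D) :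
    S.IsSubgraph D :=
  ⟨hST.1.trans hTD.1, hST.2.trans hTD.2⟩

theorem isDipath_iff_isChain_adj :
    D.IsDipath l ↔ l ≠ [] ∧ l.Nodup ∧ (∀ x ∈ l, x ∈ D.verts) ∧ l.IsChain D.Adj := by
  refine and_congr_right fun _ ↦ and_congr_right fun _ ↦ and_congr_right fun hmem ↦ ?_
  exact List.IsChain.iff_of_mem_imp fun x y hx hy ↦
    ⟨fun h ↦ ⟨hmem x hx, hmem y hy, h⟩, fun h ↦ h.2.2⟩

theorem isDipath_singleton (ha : a ∈ D.verts) : D.IsDipath [a] := by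
  simp [isDipath_iff_isChain_adj, ha]

theorem IsDipath.mono (h : T.IsSubgraph D) (hl : T.IsDipath l) : D.IsDipath l :=
  ⟨hl.1, hl.2.1, fun x hx ↦ h.1 (hl.2.2.1 x hx), List.IsChain.imp (fun _ _ hxy ↦ h.2 hxy) hl.2.2.2⟩

theorem IsDipath.infix {l' : List V} (hl : D.IsDipath l) (h : l' <:+: l) (hne : l' ≠ []) :
    D.IsDipath l' :=
  ⟨hne, hl.2.1.sublist h.sublist, fun x hx ↦ hl.2.2.1 x (h.subset hx), hl.2.2.2.infix h⟩

theorem isDipath_append_pair_iff :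
    D.IsDipath (l ++ [u, v]) ↔ D.IsDipath (l ++ [u]) ∧ v ∉ l ++ [u] ∧ D.Adj u v := by
  have hnodup : (l ++ [u, v]).Nodup ↔ (l ++ [u]).Nodup ∧ v ∉ l ++ [u] := by
    grind [List.nodup_append]
  have hverts (huv : D.Adj u v) :
      (∀ x ∈ l ++ [u, v], x ∈ D.verts) ↔ ∀ x ∈ l ++ [u], x ∈ D.verts := by
    have := huv.2.1
    grind
  have hchain : (l ++ [u, v]).IsChain D.Adj ↔ (l ++ [u]).IsChain D.Adj ∧ D.Adj u v := by simp
  grind [isDipath_iff_isChain_adj]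

theorem Reaches.mem_left (h : D.Reaches a b) : a ∈ D.verts := by
  obtain ⟨l, hl, hhead, -⟩ := h
  exact hl.2.2.1 a (List.mem_of_head? hhead)

theorem Reaches.mem_right (h : D.Reaches a b) : b ∈ D.verts := by
  obtain ⟨l, hl, -, hlast⟩ := h
  exact hl.2.2.1 b (List.mem_of_getLast? hlast)

theorem Reaches.refl (ha : a ∈ D.verts) : D.Reaches a a :=
  ⟨[a], isDipath_singleton ha, rfl, rfl⟩

theorem Reaches.mono (h : T.IsSubgraph D) (hab : T.Reaches a b) : D.Reaches a b := by
  obtain ⟨l, hl, hends⟩ := hab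
  exact ⟨l, hl.mono h, hends⟩

theorem Reaches.tail (hab : D.Reaches a b) (hbc : D.Adj b c) : D.Reaches a c := by
  obtain ⟨l, hl, hhead, hlast⟩ := hab
  obtain ⟨l, rfl⟩ := List.getLast?_eq_some_iff.1 hlast
  by_cases hc : c ∈ l ++ [b]
  · obtain ⟨s, t, hst⟩ := List.append_of_mem hc
    have hprefix : s ++ [c] <+: l ++ [b] := ⟨t, by simp [hst]⟩
    exact ⟨s ++ [c], hl.infix hprefix.isInfix (by simp), by simpa [hst] using hhead, by simp⟩
  · exact ⟨l ++ [b, c], isDipath_append_pair_iff.2 ⟨hl, hc, hbc⟩, by simpa using hhead, by simp⟩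

theorem reaches_iff_reflTransGen :
    D.Reaches a b ↔ a ∈ D.verts ∧ Relation.ReflTransGen D.Adj a b := by
  constructor
  · intro h
    refine ⟨h.mem_left, ?_⟩
    obtain ⟨l, hl, hhead, hlast⟩ := h
    obtain ⟨hne, -, -, hchain⟩ := isDipath_iff_isChain_adj.1 hl
    have hwalk := l.relationReflTransGen_of_exists_isChain hchain hne
    rwa [List.head_of_head?_eq_some hhead, List.getLast_of_getLast?_eq_some hlast] at hwalk
  · rintro ⟨ha, hab⟩
    induction hab with
    | refl => exact .refl ha
    | tail _ hbc ih => exact ih.tail hbc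

theorem Reaches.trans (hab : D.Reaches a b) (hbc : D.Reaches b c) : D.Reaches a c :=
  reaches_iff_reflTransGen.2 ⟨hab.mem_left, (reaches_iff_reflTransGen.1 hab).2.trans
    (reaches_iff_reflTransGen.1 hbc).2⟩

/-- The digraph `D - v`, obtained by deleting `v` and all arcs incident to it; it expresses that a
dipath of `D` avoids `v`. -/
def deleteVert (D : DirGraph V) (v : V) : DirGraph V :=
  ⟨D.verts \ {v}, {a ∈ D.arcs | a.1 ≠ v ∧ a.2 ≠ v}⟩

theorem IsSubgraph.deleteVert (h : T.IsSubgraph D) (v : V) :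
    (T.deleteVert v).IsSubgraph (D.deleteVert v) :=
  ⟨Set.sdiff_subset_sdiff_left h.1, fun _ ha ↦ ⟨h.2 ha.1, ha.2⟩⟩

theorem isDipath_deleteVert_iff : (D.deleteVert v).IsDipath l ↔ D.IsDipath l ∧ v ∉ l := by
  constructor
  · intro hl
    exact ⟨hl.mono ⟨Set.sdiff_subset, Set.sep_subset _ _⟩, fun hmem ↦ (hl.2.2.1 v hmem).2 rfl⟩
  · rintro ⟨⟨hne, hnodup, hverts, harcs⟩, hvl⟩
    have hne_of_mem {x : V} (hx : x ∈ l) : x ≠ v := fun h ↦ hvl (h ▸ hx)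
    exact ⟨hne, hnodup, fun x hx ↦ ⟨hverts x hx, hne_of_mem hx⟩,
      List.IsChain.imp_of_mem_imp (fun _ _ hx hy h ↦ ⟨h, hne_of_mem hx, hne_of_mem hy⟩) harcs⟩

theorem exists_isDipath_append_pair_iff :
    (∃ l : List V, D.IsDipath (l ++ [u, v]) ∧ (l ++ [u, v]).head? = some r) ↔
      D.Adj u v ∧ (D.deleteVert v).Reaches r u := by
  simp only [isDipath_append_pair_iff]
  constructor
  · rintro ⟨l, ⟨hl, hvl, huv⟩, hhead⟩
    exact ⟨huv, l ++ [u], isDipath_deleteVert_iff.2 ⟨hl, hvl⟩, by simpa using hhead, by simp⟩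
  · rintro ⟨huv, l, hl, hhead, hlast⟩
    obtain ⟨l, rfl⟩ := List.getLast?_eq_some_iff.1 hlast
    obtain ⟨hl, hvl⟩ := isDipath_deleteVert_iff.1 hl
    exact ⟨l, ⟨hl, hvl, huv⟩, by simpa using hhead⟩

theorem exists_eq_append_pair_of_ne {α : Type*} {l : List α} {a b : α}
    (hhead : l.head? = some a) (hlast : l.getLast? = some b) (hab : a ≠ b) :
    ∃ m w, l = m ++ [w, b] := by
  obtain ⟨k, rfl⟩ := List.getLast?_eq_some_iff.1 hlast
  obtain rfl | ⟨m, w, rfl⟩ := k.eq_nil_or_concat'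
  · exact absurd (Option.some_inj.1 hhead).symm hab
  · exact ⟨m, w, by simp⟩

theorem Reaches.exists_adj_reaches_deleteVert (hab : D.Reaches a b) (hne : a ≠ b) :
    ∃ w, D.Adj w b ∧ (D.deleteVert b).Reaches a w := by
  obtain ⟨l, hl, hhead, hlast⟩ := hab
  obtain ⟨m, w, rfl⟩ := exists_eq_append_pair_of_ne hhead hlast hne
  exact ⟨w, exists_isDipath_append_pair_iff.1 ⟨m, hl, hhead⟩⟩

theorem Reaches.deleteVert (hab : D.Reaches a b) (hvb : ¬ D.Reaches v b) :
    (D.deleteVert v).Reaches a b := by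
  obtain ⟨l, hl, hhead, hlast⟩ := hab
  refine ⟨l, isDipath_deleteVert_iff.2 ⟨hl, fun hv ↦ hvb ?_⟩, hhead, hlast⟩
  obtain ⟨s, t, rfl⟩ := List.append_of_mem hv
  exact ⟨v :: t, hl.infix (List.suffix_append s (v :: t)).isInfix (by simp), rfl,
    by simpa using hlast⟩

/-- The distance from `r` to `x`, i.e. the number of arcs of a shortest dipath from `r` to `x`; it
has the junk value `0` if `r` does not reach `x`. -/
noncomputable def dist (D : DirGraph V) (r x : V) : ℕ :=
  sInf {n | ∃ l, D.IsDipath l ∧ l.head? = some r ∧ l.getLast? = some x ∧ l.length = n + 1}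

theorem Reaches.exists_isDipath_length_eq_dist (h : D.Reaches r x) :
    ∃ l, D.IsDipath l ∧ l.head? = some r ∧ l.getLast? = some x ∧ l.length = D.dist r x + 1 := by
  obtain ⟨l, hl, hhead, hlast⟩ := h
  have hlength : l.length = l.length - 1 + 1 :=
    (Nat.succ_pred_eq_of_pos (List.length_pos_of_ne_nil hl.1)).symm
  exact Nat.sInf_mem (s := {n | ∃ l, D.IsDipath l ∧ l.head? = some r ∧ l.getLast? = some x ∧
    l.length = n + 1}) ⟨_, l, hl, hhead, hlast, hlength⟩

theorem Reaches.exists_adj_dist_lt (h : D.Reaches r x) (hne : r ≠ x) :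
    ∃ w, D.Adj w x ∧ D.dist r w < D.dist r x := by
  obtain ⟨l, hl, hhead, hlast, hlength⟩ := h.exists_isDipath_length_eq_dist
  obtain ⟨m, w, rfl⟩ := exists_eq_append_pair_of_ne hhead hlast hne
  obtain ⟨hm, -, hwx⟩ := isDipath_append_pair_iff.1 hl
  have hdist : D.dist r w ≤ m.length :=
    Nat.sInf_le ⟨m ++ [w], hm, by simpa using hhead, by simp, by simp⟩
  have hm_length : m.length + 1 = D.dist r x := by simpa using hlength
  exact ⟨w, hwx, by omega⟩

/-- The spanning digraph on the vertices of `D` in which `p x` is the only in-neighbor of each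
vertex `x ≠ r`; it encodes a tree rooted at `r` by its parent function `p`. -/
def parentGraph (D : DirGraph V) (r : V) (p : V → V) : DirGraph V :=
  ⟨D.verts, {a | a.2 ∈ D.verts ∧ a.2 ≠ r ∧ a.1 = p a.2}⟩

section ParentGraph

variable {p : V → V}

theorem inDeg_parentGraph_root : (D.parentGraph r p).inDeg r = 0 := by
  have hempty : {a ∈ (D.parentGraph r p).arcs | a.2 = r} = ∅ :=
    Set.eq_empty_iff_forall_notMem.2 fun _ ha ↦ ha.1.2.1 ha.2
  rw [inDeg, hempty, Set.ncard_empty]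

theorem inDeg_parentGraph_of_ne (hx : x ∈ D.verts) (hxr : x ≠ r) :
    (D.parentGraph r p).inDeg x = 1 := by
  have hsingleton : {a ∈ (D.parentGraph r p).arcs | a.2 = x} = {(p x, x)} := by
    ext ⟨y, z⟩
    simp only [parentGraph, Set.mem_ofPred_eq, Set.mem_singleton_iff, Prod.mk.injEq]
    grind
  rw [inDeg, hsingleton, Set.ncard_singleton]

theorem isSubgraph_parentGraph (hp : ∀ x ∈ D.verts, x ≠ r → D.Adj (p x) x) :
    (D.parentGraph r p).IsSubgraph D := by
  refine ⟨subset_rfl, ?_⟩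
  rintro ⟨w, x⟩ ⟨hx, hxr, hwx⟩
  obtain rfl : w = p x := hwx
  exact (hp x hx hxr).2.2

theorem reaches_parentGraph {α : Type*} [LT α] [WellFoundedLT α] {d : V → α}
    (hp : ∀ x ∈ D.verts, x ≠ r → p x ∈ D.verts ∧ d (p x) < d x) (hx : x ∈ D.verts) :
    (D.parentGraph r p).Reaches r x := by
  induction x using (InvImage.wf d wellFounded_lt).induction with
  | _ x ih =>
  by_cases hxr : x = r
  · exact hxr ▸ .refl hx
  · obtain ⟨hpx, hlt⟩ := hp x hx hxr
    exact (ih (p x) hlt hpx).tail ⟨hpx, hx, hx, hxr, rfl⟩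

theorem isOutBranching_parentGraph {α : Type*} [LT α] [WellFoundedLT α] {d : V → α}
    (hr : r ∈ D.verts) (hp : ∀ x ∈ D.verts, x ≠ r → D.Adj (p x) x ∧ d (p x) < d x) :
    (D.parentGraph r p).IsOutBranching D r := by
  refine ⟨⟨⟨?_, hr, inDeg_parentGraph_root, fun x ↦ inDeg_parentGraph_of_ne, fun x ↦ ?_⟩,
    isSubgraph_parentGraph fun x hx hxr ↦ (hp x hx hxr).1⟩, rfl⟩
  · rintro ⟨w, x⟩ ⟨hx, hxr, hwx⟩
    exact ⟨hwx ▸ (hp x hx hxr).1.1, hx⟩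
  · exact reaches_parentGraph fun x hx hxr ↦ (hp x hx hxr).imp_left And.left

end ParentGraph

theorem exists_isOutBranching (hr : r ∈ D.verts) (hreach : D.verts ⊆ D.reachSet r) :
    ∃ T, IsOutBranching T D r := by
  have hparent (x : V) : ∃ w, x ∈ D.verts → x ≠ r → D.Adj w x ∧ D.dist r w < D.dist r x := by
    by_cases h : x ∈ D.verts ∧ x ≠ r
    · obtain ⟨w, hw⟩ := Reaches.exists_adj_dist_lt (hreach h.1) h.2.symm
      exact ⟨w, fun _ _ ↦ hw⟩
    · exact ⟨r, fun hx hxr ↦ absurd ⟨hx, hxr⟩ h⟩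
  choose p hp using hparent
  exact ⟨D.parentGraph r p, isOutBranching_parentGraph hr hp⟩

/-- The spanning subgraph of `D` that keeps, among the arcs with head `v`, only `(u, v)`; it forces
out-branchings not rooted at `v` to contain that arc. -/
def pruneInArcs (D : DirGraph V) (u v : V) : DirGraph V :=
  ⟨D.verts, {a ∈ D.arcs | a.2 = v → a.1 = u}⟩

theorem isSubgraph_pruneInArcs : (D.pruneInArcs u v).IsSubgraph D :=
  ⟨subset_rfl, Set.sep_subset _ _⟩

theorem isSubgraph_deleteVert_pruneInArcs : (D.deleteVert v).IsSubgraph (D.pruneInArcs u v) :=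
  ⟨Set.sdiff_subset, fun _ ha ↦ ⟨ha.1, fun h ↦ absurd h ha.2.2⟩⟩

theorem Reaches.pruneInArcs (hv : (D.pruneInArcs u v).Reaches r v) (hx : D.Reaches r x) :
    (D.pruneInArcs u v).Reaches r x := by
  rw [reaches_iff_reflTransGen] at hx
  obtain ⟨hr, hrx⟩ := hx
  induction hrx with
  | refl => exact .refl hr
  | @tail b c _ hbc ih =>
    by_cases hcv : c = v
    · exact hcv ▸ hv
    · exact ih.tail ⟨hbc.1, hbc.2.1, hbc.2.2, fun h ↦ absurd h hcv⟩

theorem exists_isOutBranching_mem_arcs (hreach : D.verts ⊆ D.reachSet r) (huv : D.Adj u v)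
    (hru : (D.deleteVert v).Reaches r u) : ∃ T, IsOutBranching T D r ∧ (u, v) ∈ T.arcs := by
  have hv : (D.pruneInArcs u v).Reaches r v :=
    (hru.mono isSubgraph_deleteVert_pruneInArcs).tail ⟨huv.1, huv.2.1, huv.2.2, fun _ ↦ rfl⟩
  obtain ⟨T, ⟨hT, hTsub⟩, hTverts⟩ :=
    exists_isOutBranching hv.mem_left fun x hx ↦ hv.pruneInArcs (hreach hx)
  refine ⟨T, ⟨⟨hT, hTsub.trans isSubgraph_pruneInArcs⟩, hTverts⟩, ?_⟩
  obtain ⟨w, hwv, -⟩ := (hT.reach_root v (hTverts.ge huv.2.1)).exists_adj_reaches_deleteVert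
    (ne_of_mem_of_not_mem hru.mem_left fun h ↦ h.2 rfl)
  obtain rfl : w = u := (hTsub.2 hwv.2.2).2 rfl
  exact hwv.2.2

theorem IsOutTree.adj_of_mem_arcs (hT : T.IsOutTree r) (huv : (u, v) ∈ T.arcs) : T.Adj u v :=
  ⟨(hT.arcs_mem _ huv).1, (hT.arcs_mem _ huv).2, huv⟩

theorem IsOutTree.eq_of_mem_arcs (hT : T.IsOutTree r) (hvr : v ≠ r) (hu : (u, v) ∈ T.arcs)
    (hw : (w, v) ∈ T.arcs) : u = w := by
  obtain ⟨a, ha⟩ := Set.ncard_eq_one.1 (hT.indeg_one v (hT.arcs_mem _ hu).2 hvr)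
  have eq_a {x : V} (hx : (x, v) ∈ T.arcs) : (x, v) = a := ha.subset ⟨hx, rfl⟩
  exact congrArg Prod.fst ((eq_a hu).trans (eq_a hw).symm)

theorem IsOutTree.reaches_deleteVert_of_mem_arcs (hT : T.IsOutTree r) (hvr : v ≠ r)
    (huv : (u, v) ∈ T.arcs) : (T.deleteVert v).Reaches r u := by
  have hrv : T.Reaches r v := hT.reach_root v (hT.arcs_mem _ huv).2
  obtain ⟨w, hwv, hrw⟩ := hrv.exists_adj_reaches_deleteVert hvr.symm
  exact hT.eq_of_mem_arcs hvr hwv.2.2 huv ▸ hrw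

theorem IsOutBranching.reachSet_eq_of_reaches_root (hT : IsOutBranching T D r)
    (hvr : D.Reaches v r) : D.reachSet v = D.verts :=
  Set.Subset.antisymm (fun _ ↦ Reaches.mem_right) fun x hx ↦
    hvr.trans ((hT.1.1.reach_root x (hT.2.ge hx)).mono hT.1.2)

end

theorem not_useless_iff_dipath_from_root_general {V : Type} (D : DirGraph V) (r u v : V)
    (hr : reachSet D r = D.verts) (hv : reachSet D v ≠ D.verts) :
    ¬ Useless D (u, v) ↔
      ∃ l : List V, D.IsDipath (l ++ [u, v]) ∧ (l ++ [u, v]).head? = some r := by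
  rw [exists_isDipath_append_pair_iff]
  constructor
  · intro huseful
    obtain ⟨T, r', hT, huv⟩ : ∃ T r', IsOutBranching T D r' ∧ (u, v) ∈ T.arcs := by
      simpa [Useless] using huseful
    have hvr' : ¬ D.Reaches v r' := fun h ↦ hv (hT.reachSet_eq_of_reaches_root h)
    have hrr' : D.Reaches r r' := hr.ge (hT.1.2.1 hT.1.1.root_mem)
    -- `inDeg r' = 0` would not do: for infinitely many arcs into `r'`, `ncard` is `0` as well.
    have hne : v ≠ r' := fun h ↦ hvr' (h.symm ▸ .refl hrr'.mem_right)
    have hr'u : (D.deleteVert v).Reaches r' u :=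
      (hT.1.1.reaches_deleteVert_of_mem_arcs hne huv).mono (hT.1.2.deleteVert v)
    exact ⟨(hT.1.1.adj_of_mem_arcs huv).mono hT.1.2, (hrr'.deleteVert hvr').trans hr'u⟩
  · rintro ⟨huv, hru⟩ huseless
    obtain ⟨T, hT, huvT⟩ := exists_isOutBranching_mem_arcs hr.ge huv hru
    exact huseless T r hT huvT

theorem not_useless_iff_dipath_from_root {V : Type} [Fintype V]
    (D : DirGraph V) (r u v : V) (hD : D.WellFormed)
    (hr : reachSet D r = D.verts)
    (ha : (u, v) ∈ D.arcs) (hv : reachSet D v ≠ D.verts) :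
    ¬ Useless D (u, v) ↔
      ∃ l : List V, D.IsDipath (l ++ [u, v]) ∧ (l ++ [u, v]).head? = some r :=
  not_useless_iff_dipath_from_root_general D r u v hr hv

end DirGraph
end

section
/- Let D be a digraph on n vertices with at least one out-branching. If every vertex of D has in-degree at least 3, or if D is an oriented graph in which every vertex has in-degree at least 2, then ℓ(D) ≥ (1/4)·√n. -/
/-!
Let `k = ℓ(D)` and let `T` be an out-branching with as many leaves as possible. The leaves and
branch vertices of `T` number at most `2k - 1`, and every other vertex lies on a path of vertices
with a single child above one of them, so it suffices that such a path
`w (q - 1) → ⋯ → w 0` has at most `8k + 2` vertices.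

By hypothesis `w j` has an in-neighbour `s j` that is neither of its neighbours on the path.
Optimality of `T` excludes `s j = w i` with `i > j`, so `s j` lies below the path, or outside the
subtree of its top vertex, or it is `w i` with `i + 2 ≤ j`. Going from `w j` to `s j` repeatedly
leaves the path on one of the two sides; this splits the path into two classes, each of which can
be hung by the arcs `(s j, w j)` on an out-tree that avoids the path.

At most `4k + 1` path vertices can be hung on one tree. At most `k` of them become leaves. If a set
of path vertices `w c` is moved to their path predecessors `w (c + 1)`, all of which keep another
child, then there are at least as many leaves as moved vertices, so at most `k` vertices are moved.
By a greedy `3`-colouring this can be done at a third of the internal vertices `w (c + 1)`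
simultaneously, hence there are at most `3k + 1` internal vertices.

Altogether `D` has at most `(2k - 1) (8k + 3) ≤ 16k²` vertices.
-/

open scoped Finset in
theorem exists_independent_subset_of_lt {α : Type*} [LinearOrder α] (s : Finset α) (f g : α → α)
    (hf : ∀ a ∈ s, a < f a) (hg : ∀ a ∈ s, a < g a) :
    ∃ t ⊆ s, #s ≤ 3 * #t ∧ ∀ a ∈ t, f a ∉ t ∧ g a ∉ t := by
  have fresh : ∀ x y : Fin 3, ∃ z, z ≠ x ∧ z ≠ y := by decide
  -- Colour greedily from the largest element down.
  obtain ⟨col, hcol⟩ : ∃ col : α → Fin 3, ∀ a ∈ s, col (f a) ≠ col a ∧ col (g a) ≠ col a := by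
    induction s using Finset.induction_on_min with
    | empty => exact ⟨fun _ => 0, by simp⟩
    | insert a s hlt ih =>
      obtain ⟨col, hcol⟩ := ih (fun b hb => hf b (Finset.mem_insert_of_mem hb))
        (fun b hb => hg b (Finset.mem_insert_of_mem hb))
      obtain ⟨z, hzf, hzg⟩ := fresh (col (f a)) (col (g a))
      refine ⟨Function.update col a z, fun b hb => ?_⟩
      have hab : a ≤ b := (Finset.mem_insert.1 hb).elim ge_of_eq fun h => (hlt b h).le
      rw [Function.update_of_ne (hab.trans_lt (hf b hb)).ne',
        Function.update_of_ne (hab.trans_lt (hg b hb)).ne']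
      rcases Finset.mem_insert.1 hb with rfl | hb
      · rw [Function.update_self]
        exact ⟨hzf.symm, hzg.symm⟩
      · rw [Function.update_of_ne (hlt b hb).ne']
        exact hcol b hb
  obtain ⟨z, -, hz⟩ := Finset.exists_max_image Finset.univ (fun z => #{a ∈ s | col a = z})
    Finset.univ_nonempty
  refine ⟨{a ∈ s | col a = z}, Finset.filter_subset _ _, ?_, fun a ha => ?_⟩
  · calc #s ≤ ∑ z', #{a ∈ s | col a = z'} :=
          (Finset.card_eq_sum_card_fiberwise fun _ _ => Finset.mem_coe.2 (Finset.mem_univ _)).le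
      _ ≤ 3 * #{a ∈ s | col a = z} := by
          simpa using Finset.sum_le_card_nsmul Finset.univ _ _ hz
  · obtain ⟨has, rfl⟩ := Finset.mem_filter.1 ha
    exact ⟨fun h => (hcol a has).1 (Finset.mem_filter.1 h).2,
      fun h => (hcol a has).2 (Finset.mem_filter.1 h).2⟩

namespace DirGraph

section

open Relation
open scoped Finset

/-- A finite out-tree of `D` given by its parent function, which is the form in which out-trees
are cut and pasted below. Acyclicity is certified by a height function that increases along the
arcs. The values of `parent` and `height` outside `verts`, and `parent root`, are irrelevant. -/
structure ParentTree {V : Type} (D : DirGraph V) where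
  verts : Finset V
  root : V
  parent : V → V
  height : V → ℕ
  root_mem : root ∈ verts
  verts_subset : ∀ v ∈ verts, v ∈ D.verts
  parent_mem : ∀ v ∈ verts, v ≠ root → parent v ∈ verts
  arc_mem : ∀ v ∈ verts, v ≠ root → (parent v, v) ∈ D.arcs
  height_lt : ∀ v ∈ verts, v ≠ root → height (parent v) < height v

namespace ParentTree

section Basic

variable {V : Type} [DecidableEq V] {D : DirGraph V} (T : ParentTree D) {v b x : V}

/-- The out-neighbours of a vertex in the tree. -/
def children (x : V) : Finset V :=
  {b ∈ T.verts | b ≠ T.root ∧ T.parent b = x}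

/-- The vertices without children. -/
def leaves : Finset V :=
  {x ∈ T.verts | T.children x = ∅}

/-- The reflexive ancestor relation: `T.Anc x y` means `x ⪯_T y`. -/
def Anc : V → V → Prop :=
  ReflTransGen fun x y => y ∈ T.children x

variable {T}

theorem mem_children : b ∈ T.children x ↔ b ∈ T.verts ∧ b ≠ T.root ∧ T.parent b = x :=
  Finset.mem_filter

theorem mem_leaves : x ∈ T.leaves ↔ x ∈ T.verts ∧ T.children x = ∅ :=
  Finset.mem_filter

theorem mem_children_parent (hb : b ∈ T.verts) (hbr : b ≠ T.root) :
    b ∈ T.children (T.parent b) :=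
  mem_children.2 ⟨hb, hbr, rfl⟩

theorem height_lt_of_mem_children (h : b ∈ T.children x) : T.height x < T.height b := by
  obtain ⟨hb, hbr, rfl⟩ := mem_children.1 h
  exact T.height_lt b hb hbr

theorem Anc.height_le (h : T.Anc v b) : T.height v ≤ T.height b := by
  induction h with
  | refl => exact le_rfl
  | tail _ hc ih => exact ih.trans (height_lt_of_mem_children hc).le

theorem Anc.mem (h : T.Anc v b) (hv : v ∈ T.verts) : b ∈ T.verts := by
  rcases ReflTransGen.cases_tail h with rfl | ⟨c, -, hc⟩
  · exact hv
  · exact (mem_children.1 hc).1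

theorem Anc.ne_root (h : T.Anc v b) (hb : b ≠ v) : b ≠ T.root := by
  rcases ReflTransGen.cases_tail h with rfl | ⟨c, -, hc⟩
  · exact absurd rfl hb
  · exact (mem_children.1 hc).2.1

theorem Anc.parent (h : T.Anc v b) (hb : b ≠ v) : T.Anc v (T.parent b) := by
  rcases ReflTransGen.cases_tail h with rfl | ⟨c, hvc, hc⟩
  · exact absurd rfl hb
  · rwa [(mem_children.1 hc).2.2]

theorem Anc.of_parent (h : T.Anc v (T.parent b)) (hb : b ∈ T.verts) (hbr : b ≠ T.root) :
    T.Anc v b :=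
  ReflTransGen.tail h (mem_children_parent hb hbr)

theorem anc_root (hv : v ∈ T.verts) : T.Anc T.root v := by
  induction hm : T.height v using Nat.strong_induction_on generalizing v with
  | _ m ih =>
    by_cases hvr : v = T.root
    · exact hvr ▸ ReflTransGen.refl
    · exact (ih _ (hm ▸ T.height_lt v hv hvr) (T.parent_mem v hv hvr) rfl).of_parent hv hvr

variable (T)

theorem sum_card_children : ∑ x ∈ T.verts, #(T.children x) + 1 = #T.verts := by
  have hfiber : #(T.verts.erase T.root) = ∑ x ∈ T.verts, #(T.children x) := by
    rw [Finset.card_eq_sum_card_fiberwise (f := T.parent) (t := T.verts) fun b hb =>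
      T.parent_mem b (Finset.mem_of_mem_erase hb) (Finset.ne_of_mem_erase hb)]
    refine Finset.sum_congr rfl fun x _ => congrArg _ ?_
    ext b
    rw [Finset.mem_filter, Finset.mem_erase, mem_children]
    tauto
  rw [← hfiber, Finset.card_erase_add_one T.root_mem]

theorem card_children_ne_one_lt :
    #{x ∈ T.verts | #(T.children x) ≠ 1} < 2 * #T.leaves := by
  have hleaves : #T.leaves = ∑ x ∈ T.verts, if #(T.children x) = 0 then 1 else 0 := by
    simp only [leaves, Finset.card_eq_zero, Finset.card_filter]
  have key : ∑ x ∈ T.verts, ((if #(T.children x) ≠ 1 then 1 else 0) + 1) ≤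
      ∑ x ∈ T.verts, (2 * (if #(T.children x) = 0 then 1 else 0) + #(T.children x)) :=
    Finset.sum_le_sum fun x _ => by split_ifs <;> omega
  rw [Finset.sum_add_distrib, Finset.sum_add_distrib, ← Finset.mul_sum, ← hleaves,
    ← Finset.card_filter, ← Finset.card_eq_sum_ones] at key
  have := T.sum_card_children
  omega

/-- The subgraph of `D` described by the parent function. -/
def toDirGraph : DirGraph V :=
  ⟨T.verts, {a | a.2 ∈ T.children a.1}⟩

theorem reaches_toDirGraph (hv : v ∈ T.verts) : T.toDirGraph.Reaches T.root v := by
  obtain ⟨l, hchain, hlast⟩ := List.exists_isChain_cons_of_relationReflTransGen (anc_root hv)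
  have hheight : (T.root :: l).Pairwise fun x y => T.height x < T.height y := by
    have : IsTrans V fun x y => T.height x < T.height y := ⟨fun _ _ _ => lt_trans⟩
    exact (hchain.imp fun _ _ => height_lt_of_mem_children).pairwise
  have hanc : ∀ x ∈ T.root :: l, T.Anc T.root x :=
    hchain.induction (T.Anc T.root) _ (fun _ _ h hx => ReflTransGen.tail hx h)
      fun _ => ReflTransGen.refl
  exact ⟨T.root :: l, ⟨List.cons_ne_nil _ _, hheight.imp fun h => ne_of_apply_ne _ h.ne,
    fun x hx => (hanc x hx).mem T.root_mem, hchain⟩, rfl,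
    (List.getLast?_eq_some_getLast (List.cons_ne_nil _ _)).trans (congrArg some hlast)⟩

theorem isOutTreeOf_toDirGraph : IsOutTreeOf T.toDirGraph D T.root where
  left :=
    { arcs_mem := by
        rintro ⟨x, b⟩ h
        obtain ⟨hb, hbr, rfl⟩ := mem_children.1 (show b ∈ T.children x from h)
        exact ⟨T.parent_mem b hb hbr, hb⟩
      root_mem := T.root_mem
      root_indeg := by
        have : {a ∈ T.toDirGraph.arcs | a.2 = T.root} = ∅ :=
          Set.eq_empty_of_forall_notMem fun a ⟨h, ha⟩ => (mem_children.1 h).2.1 ha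
        rw [inDeg, this, Set.ncard_empty]
      indeg_one := fun v hv hvr => by
        have : {a ∈ T.toDirGraph.arcs | a.2 = v} = {(T.parent v, v)} := by
          ext ⟨x, b⟩
          constructor
          · rintro ⟨h, rfl⟩
            exact congrArg (·, b) (mem_children.1 h).2.2.symm
          · rintro ⟨⟩
            exact ⟨mem_children_parent hv hvr, rfl⟩
        rw [inDeg, this, Set.ncard_singleton]
      reach_root := fun _ hv => T.reaches_toDirGraph hv }
  right := by
    refine ⟨T.verts_subset, ?_⟩
    rintro ⟨x, b⟩ h
    obtain ⟨hb, hbr, rfl⟩ := mem_children.1 (show b ∈ T.children x from h)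
    exact T.arc_mem b hb hbr

theorem leaves_toDirGraph : T.toDirGraph.leaves = T.leaves := by
  ext x
  have harcs : {a ∈ T.toDirGraph.arcs | a.1 = x} = Prod.mk x '' T.children x := by
    ext ⟨y, b⟩
    constructor
    · rintro ⟨h, rfl⟩
      exact ⟨b, h, rfl⟩
    · rintro ⟨b, h, ⟨⟩⟩
      exact ⟨h, rfl⟩
  change x ∈ T.verts ∧ outDeg _ x = 0 ↔ x ∈ T.leaves
  rw [outDeg, harcs, Set.ncard_image_of_injective _ (Prod.mk_right_injective x),
    Set.ncard_coe_finset, Finset.card_eq_zero, mem_leaves]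

theorem card_leaves_le_ell (hD : D.verts.Finite) : #T.leaves ≤ ell D := by
  refine le_csSup ⟨D.verts.ncard, ?_⟩
    ⟨T.toDirGraph, T.root, T.isOutTreeOf_toDirGraph, by
      rw [leaves_toDirGraph, Set.ncard_coe_finset]⟩
  rintro _ ⟨T', r, hT', rfl⟩
  exact Set.ncard_le_ncard (fun x hx => hT'.2.1 hx.1) hD

end Basic

section Surgery

variable {V : Type} {D : DirGraph V} (T : ParentTree D)

/-- The subtree on a set of vertices that is closed under taking parents, except at `r`. -/
def restrict (W : Finset V) (r : V) (hr : r ∈ W) (hWT : W ⊆ T.verts)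
    (hW : ∀ v ∈ W, v ≠ r → v ≠ T.root ∧ T.parent v ∈ W) : ParentTree D where
  verts := W
  root := r
  parent := T.parent
  height := T.height
  root_mem := hr
  verts_subset v hv := T.verts_subset v (hWT hv)
  parent_mem v hv hvr := (hW v hv hvr).2
  arc_mem v hv hvr := T.arc_mem v (hWT hv) (hW v hv hvr).1
  height_lt v hv hvr := T.height_lt v (hWT hv) (hW v hv hvr).1

variable [DecidableEq V]

open Classical in
/-- The subtree of all descendants of `e`. -/
noncomputable def below (e : V) (he : e ∈ T.verts) : ParentTree D :=
  T.restrict {v ∈ T.verts | T.Anc e v} e (Finset.mem_filter.2 ⟨he, ReflTransGen.refl⟩)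
    (Finset.filter_subset _ _) fun v hv hve => by
      obtain ⟨hvT, hev⟩ := Finset.mem_filter.1 hv
      have hvr := hev.ne_root hve
      exact ⟨hvr, Finset.mem_filter.2 ⟨T.parent_mem v hvT hvr, hev.parent hve⟩⟩

open Classical in
/-- The tree that remains when the descendants of `t` are removed. -/
noncomputable def above (t : V) (ht : t ≠ T.root) : ParentTree D :=
  T.restrict {v ∈ T.verts | ¬ T.Anc t v} T.root
    (Finset.mem_filter.2 ⟨T.root_mem, fun h => h.ne_root ht.symm rfl⟩)
    (Finset.filter_subset _ _) fun v hv hvr => by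
      obtain ⟨hvT, htv⟩ := Finset.mem_filter.1 hv
      exact ⟨hvr, Finset.mem_filter.2
        ⟨T.parent_mem v hvT hvr, fun h => htv (h.of_parent hvT hvr)⟩⟩

variable {T}

theorem mem_below {e v : V} {he : e ∈ T.verts} : v ∈ (T.below e he).verts ↔ T.Anc e v := by
  classical exact Finset.mem_filter.trans (and_iff_right_of_imp fun h => h.mem he)

theorem mem_above {t v : V} {ht : t ≠ T.root} :
    v ∈ (T.above t ht).verts ↔ v ∈ T.verts ∧ ¬ T.Anc t v := by
  classical exact Finset.mem_filter

variable (T)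

open Classical in
/-- The 1-change for the arc `(u, v)`: the subtree at `v` is moved to the new parent `u`. Its
heights are raised above that of `u`. -/
noncomputable def reattach (u v : V) (hu : u ∈ T.verts) (huv : (u, v) ∈ D.arcs)
    (hvu : ¬ T.Anc v u) : ParentTree D where
  verts := T.verts
  root := T.root
  parent b := if b = v then u else T.parent b
  height b := if T.Anc v b then T.height u + 1 + T.height b else T.height b
  root_mem := T.root_mem
  verts_subset := T.verts_subset
  parent_mem b hb hbr := by
    split_ifs
    exacts [hu, T.parent_mem b hb hbr]
  arc_mem b hb hbr := by
    split_ifs with hbv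
    exacts [hbv ▸ huv, T.arc_mem b hb hbr]
  height_lt b hb hbr := by
    by_cases hbv : b = v
    · subst hbv
      rw [if_pos rfl, if_neg hvu, if_pos (show T.Anc b b from ReflTransGen.refl)]
      omega
    · have hanc : T.Anc v (T.parent b) ↔ T.Anc v b :=
        ⟨fun h => h.of_parent hb hbr, fun h => h.parent hbv⟩
      have := T.height_lt b hb hbr
      simp only [if_neg hbv, hanc]
      split_ifs <;> omega

/-- The tree `T` with new vertices `W`, where `v ∈ W` gets the parent `p v`, an old vertex or a new
vertex of smaller rank `ρ`. -/
def graft (hD : D.WellFormed) (W : Finset V) (p : V → V) (ρ : V → ℕ)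
    (hWT : ∀ v ∈ W, v ∉ T.verts) (harc : ∀ v ∈ W, (p v, v) ∈ D.arcs)
    (hp : ∀ v ∈ W, p v ∈ T.verts ∨ p v ∈ W ∧ ρ (p v) < ρ v) : ParentTree D where
  verts := T.verts ∪ W
  root := T.root
  parent v := if v ∈ W then p v else T.parent v
  height v := if v ∈ W then T.verts.sup T.height + 1 + ρ v else T.height v
  root_mem := Finset.mem_union_left _ T.root_mem
  verts_subset v hv := (Finset.mem_union.1 hv).elim (T.verts_subset v)
    fun h => (hD _ (harc v h)).2.1
  parent_mem v hv hvr := by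
    rw [Finset.mem_union] at hv ⊢
    split_ifs with hvW
    · exact (hp v hvW).imp_right And.left
    · exact Or.inl (T.parent_mem v (hv.resolve_right hvW) hvr)
  arc_mem v hv hvr := by
    split_ifs with hvW
    · exact harc v hvW
    · exact T.arc_mem v ((Finset.mem_union.1 hv).resolve_right hvW) hvr
  height_lt v hv hvr := by
    by_cases hvW : v ∈ W
    · rw [if_pos hvW, if_pos hvW]
      rcases hp v hvW with hpT | ⟨hpW, hlt⟩
      · rw [if_neg fun h => hWT _ h hpT]
        have := Finset.le_sup (f := T.height) hpT
        omega
      · rw [if_pos hpW]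
        omega
    · have hvT := (Finset.mem_union.1 hv).resolve_right hvW
      rw [if_neg hvW, if_neg hvW, if_neg fun h => hWT _ h (T.parent_mem v hvT hvr)]
      exact T.height_lt v hvT hvr

theorem sdiff_image_subset_leaves_graft {hD : D.WellFormed} {W : Finset V} {p : V → V}
    {ρ : V → ℕ} {hWT : ∀ v ∈ W, v ∉ T.verts} {harc : ∀ v ∈ W, (p v, v) ∈ D.arcs}
    {hp : ∀ v ∈ W, p v ∈ T.verts ∨ p v ∈ W ∧ ρ (p v) < ρ v} :
    W \ W.image p ⊆ (T.graft hD W p ρ hWT harc hp).leaves := by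
  intro x hx
  obtain ⟨hxW, hxp⟩ := Finset.mem_sdiff.1 hx
  refine mem_leaves.2 ⟨Finset.mem_union_right _ hxW, Finset.eq_empty_of_forall_notMem ?_⟩
  intro b hb
  obtain ⟨hbT, hbr, rfl⟩ := mem_children.1 hb
  by_cases hbW : b ∈ W
  · exact hxp (Finset.mem_image.2 ⟨b, hbW, (if_pos hbW).symm⟩)
  · rw [show (T.graft hD W p ρ hWT harc hp).parent b = T.parent b from if_neg hbW] at hxW
    exact hWT _ hxW (T.parent_mem b ((Finset.mem_union.1 hbT).resolve_right hbW) hbr)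

end Surgery

section Hanging

variable {V : Type} {D : DirGraph V} {k q : ℕ} {w s : ℕ → V}

/-- `w (q - 1) → ⋯ → w 0` is a dipath of `D` avoiding the tree `B`. -/
structure IsAvoidingPath (B : ParentTree D) (w : ℕ → V) (q : ℕ) : Prop where
  injOn : Set.InjOn w (Set.Iio q)
  notMem : ∀ i < q, w i ∉ B.verts
  arc_mem : ∀ i, i + 1 < q → (w (i + 1), w i) ∈ D.arcs

/-- The vertices `w j` with `j ∈ X` can be hung on the tree `B` by the arcs `(s j, w j)`: each `s j`
lies in `B` or is an earlier hung vertex other than `w (j - 1)`. -/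
structure IsHanging (B : ParentTree D) (w s : ℕ → V) (X : Finset ℕ) : Prop where
  arc_mem : ∀ j ∈ X, (s j, w j) ∈ D.arcs
  source : ∀ j ∈ X, s j ∈ B.verts ∨ ∃ i ∈ X, i + 2 ≤ j ∧ s j = w i

variable [DecidableEq V]

theorem card_image_sdiff_image_le {ι : Type*} [Nonempty ι] (hD : D.WellFormed)
    (hk : ∀ T : ParentTree D, #T.leaves ≤ k) (B : ParentTree D) {W : Finset ι} {w p : ι → V}
    (ρ : ι → ℕ) (hinj : Set.InjOn w W) (hwB : ∀ j ∈ W, w j ∉ B.verts)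
    (harc : ∀ j ∈ W, (p j, w j) ∈ D.arcs)
    (hp : ∀ j ∈ W, p j ∈ B.verts ∨ ∃ i ∈ W, ρ i < ρ j ∧ p j = w i) :
    #(W.image w \ W.image p) ≤ k := by
  set idx := Function.invFunOn w W
  have hidx : ∀ j ∈ W, idx (w j) = j := fun j hj => hinj.leftInvOn_invFunOn hj
  have himage : (W.image w).image (p ∘ idx) = W.image p := by
    rw [Finset.image_image]
    exact Finset.image_congr fun j hj => congrArg p (hidx j hj)
  rw [← himage]
  refine (Finset.card_le_card (sdiff_image_subset_leaves_graft (T := B) (hD := hD)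
    (ρ := ρ ∘ idx) (hWT := ?_) (harc := ?_) (hp := ?_))).trans (hk _)
  all_goals
    refine Finset.forall_mem_image.2 fun j hj => ?_
    try simp only [Function.comp_apply, hidx j hj]
  · exact hwB j hj
  · exact harc j hj
  · refine (hp j hj).imp_right ?_
    rintro ⟨i, hi, hlt, hpj⟩
    rw [hpj, hidx i hi]
    exact ⟨Finset.mem_image_of_mem w hi, hlt⟩

variable {B B₁ B₂ : ParentTree D} {X C : Finset ℕ}

theorem IsAvoidingPath.card_moved_le (hD : D.WellFormed) (hk : ∀ T : ParentTree D, #T.leaves ≤ k)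
    (hw : B.IsAvoidingPath w q) (hX : ∀ j ∈ X, j < q) (hs : B.IsHanging w s X)
    (hC : ∀ c ∈ C, c + 1 ∈ X ∧ c + 1 ∉ C ∧ ∃ j ∈ X \ C, s j = w (c + 1)) :
    #C ≤ k := by
  set p : ℕ → V := fun j => if j ∈ C then w (j + 1) else s j with hp
  have hXC : ∀ j ∈ X ∪ C, j < q := fun j hj => (Finset.mem_union.1 hj).elim (hX j)
    fun h => (Nat.lt_succ_self j).trans (hX _ (hC j h).1)
  have hinj : Set.InjOn w (X ∪ C : Finset ℕ) := hw.injOn.mono hXC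
  have hleaves : #((X ∪ C).image w \ (X ∪ C).image p) ≤ k := by
    refine card_image_sdiff_image_le hD hk B (fun j => if j ∈ C then 2 * j + 3 else 2 * j) hinj
      (fun j hj => hw.notMem j (hXC j hj)) (fun j hj => ?_) fun j hj => ?_
    all_goals
      by_cases hjC : j ∈ C
      on_goal 2 => have hjX := (Finset.mem_union.1 hj).resolve_right hjC
      all_goals simp only [hp, hjC, if_true, if_false]
    · exact hw.arc_mem j (hX _ (hC j hjC).1)
    · exact hs.arc_mem j hjX
    · refine Or.inr ⟨j + 1, Finset.mem_union_left _ (hC j hjC).1, ?_, rfl⟩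
      rw [if_neg (hC j hjC).2.1]
      omega
    · refine (hs.source j hjX).imp_right ?_
      rintro ⟨i, hi, hij, hsj⟩
      exact ⟨i, Finset.mem_union_left _ hi, by split_ifs <;> omega, hsj⟩
  -- The new parent of a moved vertex still has another child.
  have himage : (X ∪ C).image p ⊆ (X \ C).image s := by
    refine Finset.image_subset_iff.2 fun j hj => ?_
    by_cases hjC : j ∈ C
    · obtain ⟨-, -, i, hi, hsi⟩ := hC j hjC
      simpa only [hp, if_pos hjC, ← hsi] using Finset.mem_image_of_mem s hi
    · simpa only [hp, if_neg hjC] using Finset.mem_image_of_mem s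
        (Finset.mem_sdiff.2 ⟨(Finset.mem_union.1 hj).resolve_right hjC, hjC⟩)
  have hparents := (Finset.card_le_card himage).trans Finset.card_image_le
  have hcard : #((X ∪ C).image w) = #(X \ C) + #C := by
    rw [Finset.card_image_of_injOn hinj, ← Finset.sdiff_union_self_eq_union,
      Finset.card_union_of_disjoint Finset.sdiff_disjoint]
  have := Finset.le_card_sdiff ((X ∪ C).image p) ((X ∪ C).image w)
  omega

theorem IsAvoidingPath.card_internal_le (hD : D.WellFormed)
    (hk : ∀ T : ParentTree D, #T.leaves ≤ k) (hw : B.IsAvoidingPath w q)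
    (hX : ∀ j ∈ X, j < q) (hs : B.IsHanging w s X) :
    #{i ∈ X | w i ∈ X.image s} ≤ 3 * k + 1 := by
  set I := {i ∈ X | w i ∈ X.image s}
  set K := {c ∈ Finset.range q | c + 1 ∈ I}
  have hIK : #I ≤ #K + 1 := by
    have hsub : I ⊆ insert 0 (K.image (· + 1)) := by
      rintro (_ | c) hc
      · exact Finset.mem_insert_self _ _
      · have hcq := Nat.lt_of_succ_lt (hX _ (Finset.mem_filter.1 hc).1)
        exact Finset.mem_insert_of_mem (Finset.mem_image_of_mem _
          (Finset.mem_filter.2 ⟨Finset.mem_range.2 hcq, hc⟩))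
    calc #I ≤ #(insert 0 (K.image (· + 1))) := Finset.card_le_card hsub
      _ ≤ #(K.image (· + 1)) + 1 := Finset.card_insert_le _ _
      _ ≤ #K + 1 := Nat.add_le_add_right Finset.card_image_le 1
  have hKX : ∀ c ∈ K, c + 1 ∈ X ∧ ∃ j ∈ X, s j = w (c + 1) := fun c hc =>
    (Finset.mem_filter.1 (Finset.mem_filter.1 hc).2).imp_right Finset.mem_image.1
  choose! child hchildX hchild using fun c hc => (hKX c hc).2
  have hlt : ∀ c ∈ K, c < child c := fun c hc => by
    have hcq := hX _ (hKX c hc).1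
    rcases hs.source _ (hchildX c hc) with hB | ⟨i, hi, hij, hsi⟩
    · exact absurd (hchild c hc ▸ hB) (hw.notMem _ hcq)
    · have := hw.injOn (hX i hi) hcq (hsi.symm.trans (hchild c hc))
      omega
  obtain ⟨C, hCK, hKC, hC⟩ :=
    exists_independent_subset_of_lt K (· + 1) child (fun c _ => Nat.lt_succ_self c) hlt
  have hCk : #C ≤ k := hw.card_moved_le hD hk hX hs fun c hc =>
    ⟨(hKX c (hCK hc)).1, (hC c hc).1, child c,
      Finset.mem_sdiff.2 ⟨hchildX c (hCK hc), (hC c hc).2⟩, hchild c (hCK hc)⟩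
  omega

theorem IsAvoidingPath.card_hanging_le (hD : D.WellFormed) (hk : ∀ T : ParentTree D, #T.leaves ≤ k)
    (hw : B.IsAvoidingPath w q) (hX : ∀ j ∈ X, j < q) (hs : B.IsHanging w s X) :
    #X ≤ 4 * k + 1 := by
  have hinj : Set.InjOn w X := hw.injOn.mono hX
  have hleaves : #(X.image w \ X.image s) ≤ k :=
    card_image_sdiff_image_le hD hk B id hinj (fun j hj => hw.notMem j (hX j hj)) hs.arc_mem
      fun j hj => (hs.source j hj).imp_right fun ⟨i, hi, hij, hsj⟩ =>
        ⟨i, hi, (Nat.lt_add_of_pos_right two_pos).trans_le hij, hsj⟩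
  have hnotInternal : #{i ∈ X | w i ∉ X.image s} ≤ #(X.image w \ X.image s) :=
    Finset.card_le_card_of_injOn w (fun i hi => by
      obtain ⟨hiX, his⟩ := Finset.mem_filter.1 hi
      exact Finset.mem_sdiff.2 ⟨Finset.mem_image_of_mem w hiX, his⟩)
      (hinj.mono (Finset.filter_subset _ _))
  have := hw.card_internal_le hD hk hX hs
  have := Finset.card_filter_add_card_filter_not (s := X) fun i => w i ∈ X.image s
  omega

theorem IsAvoidingPath.length_le (hD : D.WellFormed) (hk : ∀ T : ParentTree D, #T.leaves ≤ k)
    (hw₁ : B₁.IsAvoidingPath w q) (hw₂ : B₂.IsAvoidingPath w q)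
    (harc : ∀ j < q, (s j, w j) ∈ D.arcs)
    (hs : ∀ j < q, s j ∈ B₁.verts ∨ s j ∈ B₂.verts ∨ ∃ i, i + 2 ≤ j ∧ s j = w i) :
    q ≤ 8 * k + 2 := by
  classical
  -- The indices from which following the arcs `(s j, w j)` backwards leads to `B₁`.
  set P : ℕ → Prop := fun j =>
    ∃ i, ReflTransGen (fun j i => i + 2 ≤ j ∧ s j = w i) j i ∧ s i ∈ B₁.verts
  have hP : ∀ {i j}, i + 2 ≤ j → s j = w i → P i → P j := fun hij hsj ⟨m, him, hm⟩ =>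
    ⟨m, him.head ⟨hij, hsj⟩, hm⟩
  have h₁ : B₁.IsHanging w s {j ∈ Finset.range q | P j} := by
    refine ⟨fun j hj => harc j (Finset.mem_range.1 (Finset.mem_filter.1 hj).1), fun j hj => ?_⟩
    obtain ⟨hjq, m, hjm, hm⟩ := Finset.mem_filter.1 hj
    rcases ReflTransGen.cases_head hjm with rfl | ⟨i, ⟨hij, hsj⟩, him⟩
    · exact Or.inl hm
    · have hiq : i ∈ Finset.range q := Finset.mem_range.2 (by grind)
      exact Or.inr ⟨i, Finset.mem_filter.2 ⟨hiq, m, him, hm⟩, hij, hsj⟩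
  have h₂ : B₂.IsHanging w s {j ∈ Finset.range q | ¬ P j} := by
    refine ⟨fun j hj => harc j (Finset.mem_range.1 (Finset.mem_filter.1 hj).1), fun j hj => ?_⟩
    obtain ⟨hjq, hjP⟩ := Finset.mem_filter.1 hj
    rcases hs j (Finset.mem_range.1 hjq) with hB₁ | hB₂ | ⟨i, hij, hsj⟩
    · exact absurd ⟨j, ReflTransGen.refl, hB₁⟩ hjP
    · exact Or.inl hB₂
    · have hiq : i ∈ Finset.range q := Finset.mem_range.2 (by grind)
      exact Or.inr ⟨i, Finset.mem_filter.2 ⟨hiq, fun hi => hjP (hP hij hsj hi)⟩, hij, hsj⟩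
  have hX₁ := hw₁.card_hanging_le hD hk
    (fun j hj => Finset.mem_range.1 (Finset.mem_filter.1 hj).1) h₁
  have hX₂ := hw₂.card_hanging_le hD hk
    (fun j hj => Finset.mem_range.1 (Finset.mem_filter.1 hj).1) h₂
  have hsplit : #{j ∈ Finset.range q | P j} + #{j ∈ Finset.range q | ¬ P j} = q := by
    rw [Finset.card_filter_add_card_filter_not, Finset.card_range]
  omega

end Hanging

section Thread

variable {V : Type} [DecidableEq V] {D : DirGraph V} {T : ParentTree D} {k q : ℕ} {e u v x : V}

variable (T) in
/-- No tree on the same vertex set has more leaves. -/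
def IsLeafMaximal : Prop :=
  ∀ T' : ParentTree D, T'.verts = T.verts → #T'.leaves ≤ #T.leaves

variable (T) in
theorem exists_isLeafMaximal : ∃ T' : ParentTree D, T'.verts = T.verts ∧ T'.IsLeafMaximal := by
  obtain ⟨T', hT', hmin⟩ := (measure fun T' : ParentTree D => #T.verts - #T'.leaves).wf.has_min
    {T' | T'.verts = T.verts} ⟨T, rfl⟩
  refine ⟨T', hT', fun T'' hT'' => ?_⟩
  have hle : #T''.leaves ≤ #T.verts :=
    hT' ▸ hT'' ▸ Finset.card_le_card (Finset.filter_subset _ _)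
  have : ¬ #T.verts - #T''.leaves < #T.verts - #T'.leaves := hmin T'' (hT''.trans hT')
  omega

theorem IsLeafMaximal.mem_leaves_of_arc_mem (hT : T.IsLeafMaximal) (hu : u ∈ T.verts)
    (huv : (u, v) ∈ D.arcs) (hvu : ¬ T.Anc v u) (hx : T.children x = {v}) (hux : u ≠ x) :
    u ∈ T.leaves := by
  by_contra huleaf
  obtain ⟨hv, hvr, hvx⟩ := mem_children.1 (hx ▸ Finset.mem_singleton_self v)
  have hxleaf : x ∉ T.leaves := fun h =>
    Finset.singleton_ne_empty v (hx.symm.trans (mem_leaves.1 h).2)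
  have hsub : insert x T.leaves ⊆ (T.reattach u v hu huv hvu).leaves := by
    intro y hy
    have hyT : y ∈ T.verts := by
      rcases Finset.mem_insert.1 hy with rfl | hy
      · exact hvx ▸ T.parent_mem v hv hvr
      · exact (mem_leaves.1 hy).1
    refine mem_leaves.2 ⟨hyT, Finset.eq_empty_of_forall_notMem fun b hb => ?_⟩
    obtain ⟨hbT, hbr, hby⟩ := mem_children.1 hb
    by_cases hbv : b = v
    · obtain rfl : u = y := (if_pos hbv).symm.trans hby
      exact (Finset.mem_insert.1 hy).elim hux huleaf
    · have hb' : b ∈ T.children y := mem_children.2 ⟨hbT, hbr, (if_neg hbv).symm.trans hby⟩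
      rcases Finset.mem_insert.1 hy with rfl | hy
      · exact hbv (Finset.mem_singleton.1 (hx ▸ hb'))
      · exact Finset.notMem_empty b ((mem_leaves.1 hy).2 ▸ hb')
  have hcard := (Finset.card_le_card hsub).trans (hT _ rfl)
  rw [Finset.card_insert_of_notMem hxleaf] at hcard
  omega

variable (T) in
/-- The first `q` proper ancestors of `e` have only one child each. -/
def IsThread (e : V) (q : ℕ) : Prop :=
  ∀ i < q, T.children (T.parent^[i + 1] e) = {T.parent^[i] e}

namespace IsThread

theorem mem_children (h : T.IsThread e q) {i : ℕ} (hi : i < q) :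
    T.parent^[i] e ∈ T.children (T.parent^[i + 1] e) :=
  h i hi ▸ Finset.mem_singleton_self _

theorem mem_verts (h : T.IsThread e q) {i : ℕ} (hi : i < q) : T.parent^[i + 1] e ∈ T.verts := by
  obtain ⟨hv, hvr, hvp⟩ := ParentTree.mem_children.1 (h.mem_children hi)
  exact hvp ▸ T.parent_mem _ hv hvr

theorem arc_mem (h : T.IsThread e q) {i : ℕ} (hi : i < q) :
    (T.parent^[i + 1] e, T.parent^[i] e) ∈ D.arcs := by
  obtain ⟨hv, hvr, hvp⟩ := ParentTree.mem_children.1 (h.mem_children hi)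
  exact hvp ▸ T.arc_mem _ hv hvr

theorem anc (h : T.IsThread e q) {i j : ℕ} (hij : i ≤ j) (hj : j ≤ q) :
    T.Anc (T.parent^[j] e) (T.parent^[i] e) := by
  induction j, hij using Nat.le_induction with
  | base => exact ReflTransGen.refl
  | succ j _ ih => exact ReflTransGen.head (h.mem_children hj) (ih (Nat.le_of_succ_le hj))

theorem strictAntiOn_height (h : T.IsThread e q) :
    StrictAntiOn (fun i => T.height (T.parent^[i] e)) (Set.Iic q) :=
  strictAntiOn_Iic_of_succ_lt fun _ hi => height_lt_of_mem_children (h.mem_children hi)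

theorem not_anc_of_lt (h : T.IsThread e q) {i j : ℕ} (hij : i < j) (hj : j ≤ q) :
    ¬ T.Anc (T.parent^[i] e) (T.parent^[j] e) := fun hanc =>
  hanc.height_le.not_gt (h.strictAntiOn_height (hij.le.trans hj) hj hij)

theorem anc_or_exists_of_anc (h : T.IsThread e q) (hu : T.Anc (T.parent^[q] e) u) :
    T.Anc e u ∨ ∃ i < q, u = T.parent^[i + 1] e := by
  induction q with
  | zero => exact Or.inl hu
  | succ q ih =>
    rcases ReflTransGen.cases_head hu with rfl | ⟨c, hc, hcu⟩
    · exact Or.inr ⟨q, q.lt_succ_self, rfl⟩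
    · rw [h q q.lt_succ_self, Finset.mem_singleton] at hc
      exact (ih (fun i hi => h i (Nat.lt_succ_of_lt hi)) (hc ▸ hcu)).imp_right
        fun ⟨i, hi, hui⟩ => ⟨i, Nat.lt_succ_of_lt hi, hui⟩

theorem isAvoidingPath {B : ParentTree D} (h : T.IsThread e q)
    (hB : ∀ i < q, T.parent^[i + 1] e ∉ B.verts) :
    B.IsAvoidingPath (fun i => T.parent^[i + 1] e) q where
  injOn _ hi _ hj hij :=
    Nat.succ_injective (h.strictAntiOn_height.injOn hi hj (congrArg T.height hij))
  notMem := hB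
  arc_mem _ hi := h.arc_mem hi

theorem le_of_arc_mem (h : T.IsThread e q) (hT : T.IsLeafMaximal) {i j : ℕ} (hi : i ≤ q)
    (harc : (T.parent^[i] e, T.parent^[j] e) ∈ D.arcs) : i ≤ j + 1 := by
  by_contra! hji
  obtain ⟨i, rfl⟩ := Nat.exists_eq_succ_of_ne_zero (Nat.ne_zero_of_lt hji)
  have hleaf := hT.mem_leaves_of_arc_mem (h.mem_verts hi) harc (h.not_anc_of_lt (by omega) hi)
    (h j (by omega)) fun heq => h.not_anc_of_lt hji hi (heq ▸ ReflTransGen.refl)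
  exact Finset.notMem_empty _ ((mem_leaves.1 hleaf).2 ▸ h.mem_children hi)

theorem exists_source (hD : D.WellFormed) (hT : T.IsLeafMaximal)
    (hsrc : ∀ v w, (v, w) ∈ D.arcs → {u | (u, v) ∈ D.arcs ∧ u ≠ w}.Nontrivial)
    (h : T.IsThread e q) {j : ℕ} (hj : j < q) :
    ∃ u, (u, T.parent^[j + 1] e) ∈ D.arcs ∧
      (T.Anc e u ∨ ¬ T.Anc (T.parent^[q] e) u ∨ ∃ i, i + 2 ≤ j ∧ u = T.parent^[i + 1] e) := by
  obtain ⟨u, ⟨harc, hne⟩, hne'⟩ := (hsrc _ _ (h.arc_mem hj)).exists_ne (T.parent^[j + 2] e)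
  refine ⟨u, harc, ?_⟩
  by_cases htop : T.Anc (T.parent^[q] e) u
  · refine (h.anc_or_exists_of_anc htop).imp_right ?_
    rintro ⟨i, hi, rfl⟩
    have hij := h.le_of_arc_mem hT hi harc
    have : i ≠ j + 1 := fun heq => hne' (heq ▸ rfl)
    have : i ≠ j := fun heq => (hD _ harc).2.2 (heq ▸ rfl)
    have : i + 1 ≠ j := fun heq => hne (heq ▸ rfl)
    exact Or.inr ⟨i, by omega, rfl⟩
  · exact Or.inr (Or.inl htop)

theorem length_le (hD : D.WellFormed) (hk : ∀ T : ParentTree D, #T.leaves ≤ k)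
    (hTD : ∀ v ∈ D.verts, v ∈ T.verts) (hT : T.IsLeafMaximal)
    (hsrc : ∀ v w, (v, w) ∈ D.arcs → {u | (u, v) ∈ D.arcs ∧ u ≠ w}.Nontrivial)
    (he : e ∈ T.verts) (h : T.IsThread e q) : q ≤ 8 * k + 2 := by
  have hbelow : ∀ i < q, T.parent^[i + 1] e ∉ (T.below e he).verts := fun i hi hmem =>
    h.not_anc_of_lt i.succ_pos hi (mem_below.1 hmem)
  -- If the thread reaches the root, nothing lies outside and any tree avoiding it will do.
  obtain ⟨B, hBavoid, hB⟩ : ∃ B : ParentTree D, (∀ i < q, T.parent^[i + 1] e ∉ B.verts) ∧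
      ∀ u ∈ T.verts, ¬ T.Anc (T.parent^[q] e) u → u ∈ B.verts := by
    by_cases hroot : T.parent^[q] e = T.root
    · exact ⟨_, hbelow, fun u hu htop => absurd (hroot ▸ anc_root hu) htop⟩
    · exact ⟨T.above _ hroot, fun i hi hmem => (mem_above.1 hmem).2 (h.anc hi le_rfl),
        fun u hu htop => mem_above.2 ⟨hu, htop⟩⟩
  have : Nonempty V := ⟨e⟩
  choose! s harc hs using fun j (hj : j < q) => exists_source hD hT hsrc h hj
  refine (h.isAvoidingPath hbelow).length_le hD hk (h.isAvoidingPath hBavoid) harc fun j hj => ?_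
  exact (hs j hj).imp mem_below.2 (Or.imp_left (hB _ (hTD _ (hD _ (harc j hj)).1)))

end IsThread

theorem exists_isThread (hv : v ∈ T.verts) :
    ∃ e ∈ T.verts, #(T.children e) ≠ 1 ∧ ∃ q, T.IsThread e q ∧ T.parent^[q] e = v := by
  induction hm : T.verts.sup T.height - T.height v using Nat.strong_induction_on
    generalizing v with
  | _ m ih =>
    by_cases hchild : #(T.children v) = 1
    · obtain ⟨c, hc⟩ := Finset.card_eq_one.1 hchild
      have hcv : c ∈ T.children v := hc ▸ Finset.mem_singleton_self c
      obtain ⟨hcT, -, hpc⟩ := mem_children.1 hcv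
      have := height_lt_of_mem_children hcv
      have := Finset.le_sup (f := T.height) hcT
      obtain ⟨e, he, hend, q, hthread, rfl⟩ := ih _ (by omega) hcT rfl
      have hv' : T.parent^[q + 1] e = v := (Function.iterate_succ_apply' _ _ _).trans hpc
      refine ⟨e, he, hend, q + 1, fun i hi => ?_, hv'⟩
      rcases Nat.lt_succ_iff_lt_or_eq.1 hi with hi | rfl
      · exact hthread i hi
      · rw [hv', hc]
    · exact ⟨v, hv, hchild, 0, fun i hi => absurd hi i.not_lt_zero, rfl⟩

theorem card_verts_le (hD : D.WellFormed) (hk : ∀ T : ParentTree D, #T.leaves ≤ k)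
    (hTD : ∀ v ∈ D.verts, v ∈ T.verts) (hT : T.IsLeafMaximal)
    (hsrc : ∀ v w, (v, w) ∈ D.arcs → {u | (u, v) ∈ D.arcs ∧ u ≠ w}.Nontrivial) :
    #T.verts ≤ 16 * k ^ 2 := by
  set ends := {x ∈ T.verts | #(T.children x) ≠ 1}
  have hcover : T.verts ⊆
      ends.biUnion fun e => (Finset.range (8 * k + 3)).image fun q => T.parent^[q] e := by
    intro v hv
    obtain ⟨e, he, hend, q, hthread, hqv⟩ := exists_isThread hv
    have hq := hthread.length_le hD hk hTD hT hsrc he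
    exact Finset.mem_biUnion.2 ⟨e, Finset.mem_filter.2 ⟨he, hend⟩,
      Finset.mem_image.2 ⟨q, Finset.mem_range.2 (Nat.lt_succ_of_le hq), hqv⟩⟩
  have hends : #ends + 1 ≤ 2 * k :=
    T.card_children_ne_one_lt.trans_le (Nat.mul_le_mul_left 2 (hk T))
  calc #T.verts ≤ #ends * (8 * k + 3) :=
        (Finset.card_le_card hcover).trans <| Finset.card_biUnion_le_card_mul _ _ _ fun e _ =>
          Finset.card_image_le.trans (Finset.card_range _).le
    _ ≤ 16 * k ^ 2 := by nlinarith

end Thread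

end ParentTree

section OutTree

variable {V : Type} {D T : DirGraph V} {r u v : V}

theorem Reaches.reflTransGen (h : D.Reaches u v) :
    ReflTransGen (fun x y => (x, y) ∈ D.arcs) u v := by
  obtain ⟨l, ⟨hne, -, -, hchain⟩, hhead, hlast⟩ := h
  obtain rfl := (List.head_eq_iff_head?_eq_some hne).2 hhead
  obtain rfl := (List.getLast_eq_iff_getLast?_eq_some hne).2 hlast
  exact List.relationReflTransGen_of_exists_isChain l hchain hne

theorem inDeg_eq_ncard (D : DirGraph V) (v : V) : D.inDeg v = {u | (u, v) ∈ D.arcs}.ncard := by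
  have : {a ∈ D.arcs | a.2 = v} = (·, v) '' {u | (u, v) ∈ D.arcs} := by
    ext ⟨u, w⟩
    constructor
    · rintro ⟨h, rfl⟩
      exact ⟨u, h, rfl⟩
    · rintro ⟨u, h, ⟨⟩⟩
      exact ⟨h, rfl⟩
  rw [inDeg, this, Set.ncard_image_of_injective _ (Prod.mk_left_injective v)]

theorem IsOutTree.notMem_arcs_root (hT : T.IsOutTree r) (hfin : T.verts.Finite) :
    (u, r) ∉ T.arcs := by
  have hfin' : {u | (u, r) ∈ T.arcs}.Finite := hfin.subset fun u hu => (hT.arcs_mem _ hu).1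
  have hempty := hT.root_indeg
  rw [inDeg_eq_ncard, Set.ncard_eq_zero hfin'] at hempty
  exact Set.eq_empty_iff_forall_notMem.1 hempty u

theorem IsOutTree.exists_parent (hT : T.IsOutTree r) :
    ∃ p : V → V, ∀ v ∈ T.verts, v ≠ r → ∀ u, (u, v) ∈ T.arcs ↔ u = p v := by
  have hparent : ∀ v ∈ T.verts, v ≠ r → ∃ p, {u | (u, v) ∈ T.arcs} = {p} := fun v hv hvr =>
    Set.ncard_eq_one.1 (inDeg_eq_ncard T v ▸ hT.indeg_one v hv hvr)
  classical
  choose! p hp using hparent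
  exact ⟨p, fun v hv hvr u => Set.ext_iff.1 (hp v hv hvr) u⟩

theorem IsOutTreeOf.exists_parentTree (hT : IsOutTreeOf T D r) (hfin : T.verts.Finite) :
    ∃ P : ParentTree D, P.verts = T.verts := by
  obtain ⟨hT, hTD⟩ := hT
  obtain ⟨p, hp⟩ := hT.exists_parent
  have hroot : ∀ v ∈ T.verts, ∃ k, p^[k] v = r := fun v hv => by
    induction (hT.reach_root v hv).reflTransGen with
    | refl => exact ⟨0, rfl⟩
    | @tail u v _ huv ih =>
      obtain ⟨hu, hv⟩ := hT.arcs_mem _ huv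
      have hvr : v ≠ r := fun h => hT.notMem_arcs_root hfin (h ▸ huv)
      obtain ⟨k, hk⟩ := ih hu
      exact ⟨k + 1, by rwa [Function.iterate_succ_apply, ← (hp v hv hvr u).1 huv]⟩
  have harc : ∀ v ∈ T.verts, v ≠ r → (p v, v) ∈ T.arcs := fun v hv hvr => (hp v hv hvr _).2 rfl
  refine ⟨{
    verts := hfin.toFinset
    root := r
    parent := p
    height := fun v => sInf {k | p^[k] v = r}
    root_mem := hfin.mem_toFinset.2 hT.root_mem
    verts_subset := fun v hv => hTD.1 (hfin.mem_toFinset.1 hv)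
    parent_mem := fun v hv hvr =>
      hfin.mem_toFinset.2 (hT.arcs_mem _ (harc v (hfin.mem_toFinset.1 hv) hvr)).1
    arc_mem := fun v hv hvr => hTD.2 (harc v (hfin.mem_toFinset.1 hv) hvr)
    height_lt := fun v hv hvr => ?_ }, hfin.coe_toFinset⟩
  have hmem : sInf {k | p^[k] v = r} ∈ {k | p^[k] v = r} :=
    Nat.sInf_mem (hroot v (hfin.mem_toFinset.1 hv))
  change sInf {k | p^[k] (p v) = r} < sInf {k | p^[k] v = r}
  rcases hk : sInf {k | p^[k] v = r} with _ | k <;> rw [hk] at hmem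
  · exact absurd hmem hvr
  · exact Nat.lt_succ_of_le (Nat.sInf_le hmem)

theorem nontrivial_inNeighbors_ne (hD : D.WellFormed)
    (hdeg : (∀ v ∈ D.verts, 3 ≤ D.inDeg v) ∨
      ((∀ u v : V, (u, v) ∈ D.arcs → (v, u) ∉ D.arcs) ∧ ∀ v ∈ D.verts, 2 ≤ D.inDeg v))
    (huv : (u, v) ∈ D.arcs) : {x | (x, u) ∈ D.arcs ∧ x ≠ v}.Nontrivial := by
  have hu := (hD _ huv).1
  suffices 1 < ({x | (x, u) ∈ D.arcs} \ {v}).ncard from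
    (Set.one_lt_ncard_iff_nontrivial_and_finite.1 this).1
  rcases hdeg with hdeg | ⟨horiented, hdeg⟩
  · have hdeg := hdeg u hu
    rw [inDeg_eq_ncard] at hdeg
    have := Set.pred_ncard_le_ncard_sdiff_singleton {x | (x, u) ∈ D.arcs} v
    omega
  · have hv : v ∉ {x | (x, u) ∈ D.arcs} := horiented u v huv
    rw [Set.sdiff_singleton_eq_self hv, ← inDeg_eq_ncard]
    exact hdeg u hu

end OutTree

end

theorem ell_ge_quarter_sqrt_general {V : Type} (D : DirGraph V) (hD : D.WellFormed)
    (hfin : D.verts.Finite) (hbr : ∃ (T : DirGraph V) (r : V), IsOutBranching T D r)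
    (hsrc : ∀ v w, (v, w) ∈ D.arcs → {u | (u, v) ∈ D.arcs ∧ u ≠ w}.Nontrivial) :
    (1 / 4 : ℝ) * Real.sqrt D.verts.ncard ≤ (ell D : ℝ) := by
  classical
  obtain ⟨T₀, r, hT₀, hverts₀⟩ := hbr
  obtain ⟨P, hP⟩ := hT₀.exists_parentTree (hverts₀ ▸ hfin)
  obtain ⟨T, hTP, hT⟩ := P.exists_isLeafMaximal
  have hverts : (T.verts : Set V) = D.verts := by rw [hTP, hP, hverts₀]
  have hcard : D.verts.ncard ≤ 16 * ell D ^ 2 := by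
    rw [← hverts, Set.ncard_coe_finset]
    exact ParentTree.card_verts_le hD (fun T => T.card_leaves_le_ell hfin)
      (fun v hv => hverts.ge hv) hT hsrc
  have hsqrt : Real.sqrt D.verts.ncard ≤ 4 * ell D :=
    Real.sqrt_le_iff.2 ⟨by positivity, by exact_mod_cast hcard.trans_eq (by ring)⟩
  linarith

theorem ell_ge_quarter_sqrt {V : Type} [Fintype V]
    (D : DirGraph V) (n : ℕ) (hD : D.WellFormed) (hn : D.verts.ncard = n)
    (hbr : ∃ (T : DirGraph V) (r : V), IsOutBranching T D r)
    (hdeg : (∀ v ∈ D.verts, 3 ≤ D.inDeg v) ∨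
      ((∀ u v : V, (u, v) ∈ D.arcs → (v, u) ∉ D.arcs) ∧
        ∀ v ∈ D.verts, 2 ≤ D.inDeg v)) :
    (1 / 4 : ℝ) * Real.sqrt n ≤ (ell D : ℝ) := by
  subst hn
  exact ell_ge_quarter_sqrt_general D hD (Set.toFinite _) hbr fun _ _ =>
    nontrivial_inNeighbors_ne hD hdeg

end DirGraph
end

section
/- Let D be a strongly connected digraph on n vertices such that every vertex of D has in-degree at least 3, or such that D is an oriented graph in which every vertex has in-degree at least 2. Then ℓ_s(D) ≥ (1/4)·√n. -/
/-!
Let `T` be an out-tree with the maximum number `k` of leaves; it may be taken spanning. If an arc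
`(u, x)`, with `u` not a descendant of `x`, can replace the arc of `T` into `x` and
thereby turns the former in-neighbour of `x` into a leaf, then `u` must be a leaf of `T`, and
each leaf serves at most one `x`. So there are at most `k` such vertices `x`, and together with the
leaves and the branching vertices they number at most `3k - 1`.

Cut at these exceptional vertices, `T` splits into at most `3k - 1` paths. An inner vertex of such
a path has an in-neighbour other than its two neighbours on the path, and this in-neighbour is a
descendant of the vertex: it lies lower on the path or below the whole path. Thus the path can be
hung anew under the subtree below it, using only these back arcs. Then, on a sparse set `S` of
positions, the back arc is exchanged for the arc from the upper neighbour on the path. A suitable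
colour class of a proper 3-colouring serves as `S` and leaves about a third of the path as leaves,
so each path has `O(k)` vertices and the digraph has `O(k²)`.
-/

section SwitchCounting

open Finset

theorem exists_greedy_coloring {ι κ : Type*} [LT ι] [WellFoundedLT ι] [Fintype κ]
    (N : ι → Finset ι) (hlt : ∀ j, ∀ i ∈ N j, i < j) (hcard : ∀ j, #(N j) < Fintype.card κ) :
    ∃ c : ι → κ, ∀ j, ∀ i ∈ N j, c i ≠ c j := by
  classical
  have fresh (j : ι) (c : ∀ i, i < j → κ) : ∃ t, ∀ i (hi : i ∈ N j), c i (hlt j i hi) ≠ t := by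
    have hused : #((N j).attach.image fun i : {i // i ∈ N j} => c i (hlt j i i.2)) <
        #(univ : Finset κ) :=
      card_image_le.trans_lt (by simpa only [card_attach, card_univ] using hcard j)
    obtain ⟨t, -, ht⟩ := exists_mem_notMem_of_card_lt_card hused
    exact ⟨t, fun i hi h => ht (mem_image.2 ⟨⟨i, hi⟩, mem_attach _ _, h⟩)⟩
  choose pick hpick using fresh
  refine ⟨wellFounded_lt.fix pick, fun j i hi => ?_⟩
  rw [wellFounded_lt.fix_eq pick j]
  exact hpick j (fun i _ => wellFounded_lt.fix pick i) i hi

/-- The elements of `{1, …, m}` without children when the parent of `j` is `j + 1` for `j ∈ S` and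
`φ j` otherwise; the value `0` of `φ` stands for a parent outside `{1, …, m}`. -/
def switchLeaves (m : ℕ) (φ : ℕ → ℕ) (S : Finset ℕ) : Finset ℕ :=
  Icc 1 m \ (Icc 1 m).image (S.piecewise Nat.succ φ)

variable {m : ℕ} {φ : ℕ → ℕ} {S : Finset ℕ} {x : ℕ}

theorem mem_switchLeaves :
    x ∈ switchLeaves m φ S ↔ x ∈ Icc 1 m ∧ ∀ j ∈ Icc 1 m, S.piecewise Nat.succ φ j ≠ x := by
  simp only [switchLeaves, mem_sdiff, mem_image, not_exists, not_and, ne_eq]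

theorem mem_switchLeaves_colorClass {κ : Type*} [DecidableEq κ] {c : ℕ → κ} {t : κ}
    (hx : x ∈ Icc 1 m) (hpred : c (x - 1) ≠ t)
    (hfiber : ∀ j ∈ Icc 1 m, φ j = x → j < m ∧ c j = t) :
    x ∈ switchLeaves m φ {j ∈ Ico 1 m | c j = t} := by
  refine mem_switchLeaves.2 ⟨hx, fun j hj hjx => ?_⟩
  by_cases hjS : j ∈ ({j ∈ Ico 1 m | c j = t} : Finset ℕ)
  · rw [piecewise_eq_of_mem _ _ _ hjS] at hjx
    subst hjx
    exact hpred (mem_filter.1 hjS).2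
  · rw [piecewise_eq_of_notMem _ _ _ hjS] at hjx
    obtain ⟨hjm, hjt⟩ := hfiber j hj hjx
    exact hjS (mem_filter.2 ⟨mem_Ico.2 ⟨(mem_Icc.1 hj).1, hjm⟩, hjt⟩)

theorem two_le_card_colors_add_card_fiber {c : ℕ → Fin 3}
    (hc : ∀ j ∈ Icc 1 m, c (φ j - 1) ≠ c j) (hx : x ∈ Icc 1 m) :
    2 ≤ #{t | x ∈ switchLeaves m φ {j ∈ Ico 1 m | c j = t}} + #{j ∈ Icc 1 m | φ j = x} +
      if φ m = x then 1 else 0 := by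
  obtain hempty | hone | htwo : #{j ∈ Icc 1 m | φ j = x} = 0 ∨ #{j ∈ Icc 1 m | φ j = x} = 1 ∨
      2 ≤ #{j ∈ Icc 1 m | φ j = x} := by omega
  · have hsub : univ.erase (c (x - 1)) ⊆
        ({t | x ∈ switchLeaves m φ {j ∈ Ico 1 m | c j = t}} : Finset (Fin 3)) := fun t ht =>
      mem_filter.2 ⟨mem_univ t, mem_switchLeaves_colorClass hx (ne_of_mem_erase ht).symm
        fun j hj hjx => absurd hjx (filter_eq_empty_iff.1 (card_eq_zero.1 hempty) hj)⟩
    have htwo := card_le_card hsub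
    rw [card_erase_of_mem (mem_univ _), card_univ, Fintype.card_fin] at htwo
    omega
  · obtain ⟨j, hj⟩ := card_eq_one.1 hone
    have hfiber (i : ℕ) (hi : i ∈ Icc 1 m) (hix : φ i = x) : i = j :=
      mem_singleton.1 (hj ▸ mem_filter.2 ⟨hi, hix⟩)
    obtain ⟨hjm, hjx⟩ := mem_filter.1 (hj.symm ▸ mem_singleton_self j)
    by_cases hlast : φ m = x
    · rw [if_pos hlast]
      omega
    have hjlt : j < m := (mem_Icc.1 hjm).2.lt_of_ne (by rintro rfl; exact hlast hjx)
    have hleaf : x ∈ switchLeaves m φ {i ∈ Ico 1 m | c i = c j} :=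
      mem_switchLeaves_colorClass hx (hjx ▸ hc j hjm) fun i hi hix => by
        rw [hfiber i hi hix]
        exact ⟨hjlt, rfl⟩
    have hpos : 0 < #{t | x ∈ switchLeaves m φ {i ∈ Ico 1 m | c i = t}} :=
      card_pos.2 ⟨c j, mem_filter.2 ⟨mem_univ _, hleaf⟩⟩
    omega
  · omega

theorem le_sum_card_switchLeaves {c : ℕ → Fin 3} (hc : ∀ j ∈ Icc 1 m, c (φ j - 1) ≠ c j) :
    m ≤ ∑ t, #(switchLeaves m φ {j ∈ Ico 1 m | c j = t}) + 1 := by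
  have hpoint := sum_le_sum fun x hx => two_le_card_colors_add_card_fiber (x := x) hc hx
  have hcolors : ∑ x ∈ Icc 1 m, #{t | x ∈ switchLeaves m φ {j ∈ Ico 1 m | c j = t}} =
      ∑ t, #(switchLeaves m φ {j ∈ Ico 1 m | c j = t}) := by
    refine (sum_card_bipartiteAbove_eq_sum_card_bipartiteBelow _).trans
      (sum_congr rfl fun t _ => congrArg card ?_)
    exact filter_mem_eq_inter.trans (inter_eq_right.2 sdiff_subset)
  have hfibers : ∑ x ∈ Icc 1 m, #{j ∈ Icc 1 m | φ j = x} ≤ m :=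
    calc ∑ x ∈ Icc 1 m, #{j ∈ Icc 1 m | φ j = x}
      _ = #{j ∈ Icc 1 m | φ j ∈ Icc 1 m} := sum_card_fiberwise_eq_card_filter _ _ _
      _ ≤ #(Icc 1 m) := card_filter_le _ _
      _ = m := by rw [Nat.card_Icc, Nat.add_sub_cancel]
  have hlast : ∑ x ∈ Icc 1 m, (if φ m = x then 1 else 0) ≤ 1 := by
    rw [sum_ite_eq]
    split_ifs <;> simp
  simp only [sum_add_distrib, sum_const, Nat.card_Icc, smul_eq_mul, hcolors] at hpoint
  omega

-- The three colour classes of a proper colouring of `j ~ j - 1`, `j ~ φ j - 1` are tried as `S`.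
theorem exists_sparse_le_card_switchLeaves (hφ : ∀ j ∈ Icc 1 m, φ j < j) :
    ∃ S ⊆ Ico 1 m, (∀ j ∈ S, j + 1 ∉ S) ∧ m ≤ 3 * #(switchLeaves m φ S) + 1 := by
  obtain ⟨c, hc⟩ := exists_greedy_coloring (κ := Fin 3)
    (fun j => ({j - 1, φ j - 1} : Finset ℕ).filter (· < j)) (fun j i hi => (mem_filter.1 hi).2)
    (fun j => (card_filter_le _ _).trans_lt (card_le_two.trans_lt (by simp)))
  have hpred (j : ℕ) : c j ≠ c (j + 1) := hc (j + 1) j (by simp)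
  have hjump (j : ℕ) (hj : j ∈ Icc 1 m) : c (φ j - 1) ≠ c j :=
    hc j _ (by simpa using (Nat.sub_le _ _).trans_lt (hφ j hj))
  obtain ⟨t, -, ht⟩ := exists_le_of_sum_le (s := univ) univ_nonempty
    (f := fun _ : Fin 3 => m - 1)
    (g := fun t => 3 * #(switchLeaves m φ {j ∈ Ico 1 m | c j = t})) (by
      have hsum := le_sum_card_switchLeaves hjump
      rw [← mul_sum, sum_const, card_univ, Fintype.card_fin, smul_eq_mul]
      omega)
  refine ⟨{j ∈ Ico 1 m | c j = t}, filter_subset _ _, fun j hj hj' => ?_, by omega⟩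
  exact hpred j ((mem_filter.1 hj).2.trans (mem_filter.1 hj').2.symm)

end SwitchCounting

/-- A finite out-tree of the digraph with arc relation `E`, encoded by the map sending each vertex
to its in-neighbour. The root is its own parent, so that `parent^[t] v` runs through the ancestors
of `v`, and acyclicity is certified by any function `depth` that decreases from child to parent. -/
structure OutTree {α : Type*} (E : α → α → Prop) where
  verts : Finset α
  root : α
  parent : α → α
  depth : α → ℕ
  root_mem : root ∈ verts
  parent_root : parent root = root
  parent_mem : ∀ v ∈ verts, parent v ∈ verts
  adj_parent : ∀ v ∈ verts, v ≠ root → E (parent v) v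
  depth_parent_lt : ∀ v ∈ verts, v ≠ root → depth (parent v) < depth v

namespace OutTree

open Finset

variable {α : Type*} {E : α → α → Prop}

section Basic

variable (T : OutTree E)

open scoped Classical in
/-- The out-neighbours of `v` in the out-tree. -/
noncomputable def children (v : α) : Finset α := {c ∈ T.verts | c ≠ T.root ∧ T.parent c = v}

/-- The vertices of out-degree `0` in the out-tree. -/
noncomputable def leaves : Finset α := {v ∈ T.verts | #(T.children v) = 0}

/-- The vertices of out-degree at least `2` in the out-tree. -/
noncomputable def branching : Finset α := {v ∈ T.verts | 2 ≤ #(T.children v)}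

/-- `w` lies on the path of the out-tree from the root to `v`; every vertex is its own ancestor. -/
def IsAncestor (w v : α) : Prop := ∃ t, T.parent^[t] v = w

/-- No out-tree of the digraph, spanning or not, has more leaves than `T`. -/
def IsMaxLeaf : Prop := ∀ T' : OutTree E, #T'.leaves ≤ #T.leaves

variable {T} {u v w c : α}

theorem mem_children : c ∈ T.children v ↔ c ∈ T.verts ∧ c ≠ T.root ∧ T.parent c = v := by
  simp only [children, mem_filter]

theorem mem_leaves :
    v ∈ T.leaves ↔ v ∈ T.verts ∧ ∀ c ∈ T.verts, c ≠ T.root → T.parent c ≠ v := by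
  simp only [leaves, mem_filter, card_eq_zero, eq_empty_iff_forall_notMem, mem_children, not_and]

theorem leaves_subset_verts : T.leaves ⊆ T.verts := fun _ hv => (mem_leaves.1 hv).1

theorem eq_of_mem_children_of_notMem_branching {c' : α} (hv : v ∉ T.branching)
    (hc : c ∈ T.children v) (hc' : c' ∈ T.children v) : c = c' := by
  have hvT : v ∈ T.verts := by
    obtain ⟨hcT, -, rfl⟩ := mem_children.1 hc
    exact T.parent_mem c hcT
  have hcard : ¬ 2 ≤ #(T.children v) := fun h => hv (mem_filter.2 ⟨hvT, h⟩)
  exact card_le_one.1 (by omega) c hc c' hc'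

theorem iterate_parent_mem (hw : w ∈ T.verts) (t : ℕ) : T.parent^[t] w ∈ T.verts :=
  Set.MapsTo.iterate (s := (T.verts : Set α)) T.parent_mem t hw

theorem depth_parent_le (hv : v ∈ T.verts) : T.depth (T.parent v) ≤ T.depth v := by
  obtain rfl | hroot := eq_or_ne v T.root
  · rw [T.parent_root]
  · exact (T.depth_parent_lt v hv hroot).le

theorem IsAncestor.depth_le (h : T.IsAncestor w v) (hv : v ∈ T.verts) :
    T.depth w ≤ T.depth v := by
  obtain ⟨t, rfl⟩ := h
  induction t with
  | zero => rfl
  | succ t ih =>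
    rw [Function.iterate_succ_apply']
    exact (depth_parent_le (iterate_parent_mem hv t)).trans ih

theorem isAncestor_refl (v : α) : T.IsAncestor v v := ⟨0, rfl⟩

theorem IsAncestor.of_parent (h : T.IsAncestor w (T.parent v)) : T.IsAncestor w v :=
  let ⟨t, ht⟩ := h
  ⟨t + 1, ht⟩

theorem IsAncestor.parent_of_ne (h : T.IsAncestor w v) (hvw : v ≠ w) :
    T.IsAncestor w (T.parent v) := by
  obtain ⟨t, ht⟩ := h
  cases t with
  | zero => exact absurd ht hvw
  | succ t => exact ⟨t, ht⟩

theorem IsAncestor.ne_root (h : T.IsAncestor w v) (hvw : v ≠ w) : v ≠ T.root := by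
  rintro rfl
  obtain ⟨t, ht⟩ := h
  exact hvw ((Function.iterate_fixed T.parent_root t).symm.trans ht)

theorem exists_iterate_parent_eq_root (hv : v ∈ T.verts) :
    ∃ t, T.parent^[t] v = T.root ∧ ∀ i < t, T.parent^[i] v ≠ T.root := by
  classical
  have hex : ∃ t, T.parent^[t] v = T.root := by
    induction hd : T.depth v using Nat.strong_induction_on generalizing v with
    | _ d ih =>
      obtain rfl | hroot := eq_or_ne v T.root
      · exact ⟨0, rfl⟩
      · obtain ⟨t, ht⟩ := ih _ (hd ▸ T.depth_parent_lt v hv hroot) (T.parent_mem v hv) rfl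
        exact ⟨t + 1, ht⟩
  exact ⟨Nat.find hex, Nat.find_spec hex, fun i hi => Nat.find_min hex hi⟩

theorem strictAntiOn_depth_iterate_parent {m : ℕ} (hw : w ∈ T.verts)
    (hroot : ∀ i < m, T.parent^[i] w ≠ T.root) :
    StrictAntiOn (fun i => T.depth (T.parent^[i] w)) (Set.Iic m) :=
  strictAntiOn_Iic_of_succ_lt fun i hi => by
    rw [Nat.succ_eq_succ, Function.iterate_succ_apply']
    exact T.depth_parent_lt _ (iterate_parent_mem hw i) (hroot i hi)

theorem sum_card_children_add_one : ∑ v ∈ T.verts, #(T.children v) + 1 = #T.verts := by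
  classical
  have hnonroot : #(T.verts.erase T.root) = ∑ v ∈ T.verts, #(T.children v) := by
    rw [card_eq_sum_card_fiberwise (f := T.parent) (t := T.verts)
      fun v hv => T.parent_mem v (mem_of_mem_erase hv)]
    refine sum_congr rfl fun v _ => congrArg card ?_
    ext c
    simp only [mem_filter, mem_erase, mem_children]
    tauto
  rw [← hnonroot, card_erase_add_one T.root_mem]

theorem card_branching_add_one_le_card_leaves : #T.branching + 1 ≤ #T.leaves := by
  classical
  have hpoint (v : α) (_ : v ∈ T.verts) : 1 + (if 2 ≤ #(T.children v) then 1 else 0) ≤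
      #(T.children v) + (if #(T.children v) = 0 then 1 else 0) := by
    split_ifs <;> omega
  have hsum := sum_le_sum hpoint
  rw [sum_add_distrib, sum_add_distrib, ← card_filter, ← card_filter, ← card_eq_sum_ones] at hsum
  have hedges := T.sum_card_children_add_one
  simp only [branching, leaves]
  omega

/-- The subtree formed by the descendants of `w`. -/
noncomputable def subtree (T : OutTree E) (hw : w ∈ T.verts) : OutTree E := by
  classical
  exact
  { verts := {v ∈ T.verts | T.IsAncestor w v}
    root := w
    parent := Function.update T.parent w w
    depth := T.depth
    root_mem := mem_filter.2 ⟨hw, isAncestor_refl w⟩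
    parent_root := Function.update_self ..
    parent_mem := fun v hv => by
      obtain ⟨hvT, hwv⟩ := mem_filter.1 hv
      obtain rfl | hne := eq_or_ne v w
      · rwa [Function.update_self]
      · rw [Function.update_of_ne hne]
        exact mem_filter.2 ⟨T.parent_mem v hvT, hwv.parent_of_ne hne⟩
    adj_parent := fun v hv hne => by
      obtain ⟨hvT, hwv⟩ := mem_filter.1 hv
      rw [Function.update_of_ne hne]
      exact T.adj_parent v hvT (hwv.ne_root hne)
    depth_parent_lt := fun v hv hne => by
      obtain ⟨hvT, hwv⟩ := mem_filter.1 hv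
      rw [Function.update_of_ne hne]
      exact T.depth_parent_lt v hvT (hwv.ne_root hne) }

theorem mem_verts_subtree {hw : w ∈ T.verts} :
    v ∈ (T.subtree hw).verts ↔ v ∈ T.verts ∧ T.IsAncestor w v := by
  simp only [subtree, mem_filter]

end Basic

section Graft

variable {ι : Type*} [Fintype ι] {a g : ι → α} {h : ι → ℕ}

/-- The out-tree obtained by adding new vertices `a i`, each with parent `g i`, which lies in the
old tree or is a new vertex of smaller height `h`. -/
noncomputable def graft (T : OutTree E) (ha : a.Injective) (hnew : ∀ i, a i ∉ T.verts)
    (hg : ∀ i, g i ∈ T.verts ∨ ∃ j, g i = a j ∧ h j < h i) (hE : ∀ i, E (g i) (a i)) :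
    OutTree E := by
  classical
  have hold {v : α} (hv : v ∈ T.verts) : ¬∃ i, a i = v := by
    rintro ⟨i, rfl⟩
    exact hnew i hv
  have hmem {v : α} : v ∈ T.verts ∪ univ.image a ↔ v ∈ T.verts ∨ ∃ i, a i = v := by
    simp only [mem_union, mem_image, mem_univ, true_and]
  exact
  { verts := T.verts ∪ univ.image a
    root := T.root
    parent := Function.extend a g T.parent
    depth := Function.extend a (fun i => T.verts.sup T.depth + 1 + h i) T.depth
    root_mem := hmem.2 (.inl T.root_mem)
    parent_root := by rw [Function.extend_apply' _ _ _ (hold T.root_mem), T.parent_root]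
    parent_mem := fun v hv => by
      rcases hmem.1 hv with hv | ⟨i, rfl⟩
      · rw [Function.extend_apply' _ _ _ (hold hv)]
        exact hmem.2 (.inl (T.parent_mem v hv))
      · rw [ha.extend_apply]
        exact hmem.2 ((hg i).imp_right fun ⟨j, hj, _⟩ => ⟨j, hj.symm⟩)
    adj_parent := fun v hv hroot => by
      rcases hmem.1 hv with hv | ⟨i, rfl⟩
      · rw [Function.extend_apply' _ _ _ (hold hv)]
        exact T.adj_parent v hv hroot
      · rw [ha.extend_apply]
        exact hE i
    depth_parent_lt := fun v hv hroot => by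
      rcases hmem.1 hv with hv | ⟨i, rfl⟩
      · rw [Function.extend_apply' _ _ _ (hold hv), Function.extend_apply' _ _ _ (hold hv),
          Function.extend_apply' _ _ _ (hold (T.parent_mem v hv))]
        exact T.depth_parent_lt v hv hroot
      · rw [ha.extend_apply, ha.extend_apply]
        rcases hg i with hgT | ⟨j, hj, hlt⟩
        · rw [Function.extend_apply' _ _ _ (hold hgT)]
          have := le_sup (f := T.depth) hgT
          omega
        · rw [hj, ha.extend_apply]
          omega }

variable {T : OutTree E} {ha : a.Injective} {hnew : ∀ i, a i ∉ T.verts}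
  {hg : ∀ i, g i ∈ T.verts ∨ ∃ j, g i = a j ∧ h j < h i} {hE : ∀ i, E (g i) (a i)}

theorem mem_verts_graft {v : α} :
    v ∈ (T.graft ha hnew hg hE).verts ↔ v ∈ T.verts ∨ ∃ i, a i = v := by
  classical
  simp only [graft, mem_union, mem_image, mem_univ, true_and]

theorem parent_graft_of_mem {v : α} (hv : v ∈ T.verts) :
    (T.graft ha hnew hg hE).parent v = T.parent v :=
  Function.extend_apply' _ _ _ fun ⟨i, hi⟩ => hnew i (hi ▸ hv)

theorem parent_graft_apply (i : ι) : (T.graft ha hnew hg hE).parent (a i) = g i :=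
  ha.extend_apply _ _ _

theorem mem_leaves_graft {v : α} (hv : v ∈ (T.graft ha hnew hg hE).verts)
    (hold : v ∈ T.verts → v ∈ T.leaves) (hgv : ∀ i, g i ≠ v) :
    v ∈ (T.graft ha hnew hg hE).leaves := by
  refine mem_leaves.2 ⟨hv, fun c hc hroot => ?_⟩
  rcases mem_verts_graft.1 hc with hcT | ⟨i, rfl⟩
  · rw [parent_graft_of_mem hcT]
    rintro rfl
    exact (mem_leaves.1 (hold (T.parent_mem c hcT))).2 c hcT hroot rfl
  · rw [parent_graft_apply]
    exact hgv i

end Graft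

section Spanning

variable {T : OutTree E} {x y : α}

theorem exists_verts_ssubset_card_leaves_le (hx : x ∈ T.verts) (hy : y ∉ T.verts) (hxy : E x y) :
    ∃ T' : OutTree E, T.verts ⊂ T'.verts ∧ #T.leaves ≤ #T'.leaves := by
  classical
  let T' := T.graft (a := fun _ : Unit => y) (g := fun _ => x) (h := fun _ => 0)
    (Function.injective_of_subsingleton _) (fun _ => hy) (fun _ => .inl hx) (fun _ => hxy)
  have hyT' : y ∈ T'.verts := mem_verts_graft.2 (.inr ⟨(), rfl⟩)
  have hsub : T.verts ⊆ T'.verts := fun v hv => mem_verts_graft.2 (.inl hv)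
  have hxyne : x ≠ y := ne_of_mem_of_not_mem hx hy
  have hleaves : insert y (T.leaves.erase x) ⊆ T'.leaves := by
    refine insert_subset (mem_leaves_graft hyT' (absurd · hy) fun _ => hxyne) fun v hv => ?_
    obtain ⟨hvx, hv⟩ := mem_erase.1 hv
    exact mem_leaves_graft (hsub (leaves_subset_verts hv)) (fun _ => hv) fun _ => hvx.symm
  have hynot : y ∉ T.leaves.erase x := fun h => hy (leaves_subset_verts (mem_of_mem_erase h))
  refine ⟨T', (ssubset_iff_of_subset hsub).2 ⟨y, hyT', hy⟩, ?_⟩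
  calc #T.leaves ≤ #(T.leaves.erase x) + 1 := tsub_le_iff_right.1 pred_card_le_card_erase
    _ = #(insert y (T.leaves.erase x)) := (card_insert_of_notMem hynot).symm
    _ ≤ #T'.leaves := card_le_card hleaves

theorem exists_adj_mem_notMem_of_reflTransGen {s : Set α} (h : Relation.ReflTransGen E x y)
    (hx : x ∈ s) (hy : y ∉ s) : ∃ a b, E a b ∧ a ∈ s ∧ b ∉ s := by
  by_contra! hclosed
  exact hy (h.rec hx fun _ hab ha => hclosed _ _ hab ha)

theorem exists_spanning_card_leaves_le [Finite α] (hconn : ∀ u v, Relation.ReflTransGen E u v)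
    (T : OutTree E) : ∃ T' : OutTree E, (∀ v, v ∈ T'.verts) ∧ #T.leaves ≤ #T'.leaves := by
  cases nonempty_fintype α
  induction hn : Fintype.card α - #T.verts using Nat.strong_induction_on generalizing T with
  | _ n ih =>
    by_cases hspan : ∀ v, v ∈ T.verts
    · exact ⟨T, hspan, le_rfl⟩
    push Not at hspan
    obtain ⟨z, hz⟩ := hspan
    obtain ⟨x, y, hxy, hx, hy⟩ :=
      exists_adj_mem_notMem_of_reflTransGen (s := T.verts) (hconn T.root z) T.root_mem hz
    obtain ⟨T₁, hss, hle₁⟩ := exists_verts_ssubset_card_leaves_le hx hy hxy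
    have hlt := card_lt_card hss
    have hcard := card_le_univ T₁.verts
    obtain ⟨T', hspan', hle'⟩ := ih _ (by omega) T₁ rfl
    exact ⟨T', hspan', hle₁.trans hle'⟩

/-- The out-tree with the single vertex `r`. -/
def single (E : α → α → Prop) (r : α) : OutTree E where
  verts := {r}
  root := r
  parent := id
  depth := fun _ => 0
  root_mem := mem_singleton_self r
  parent_root := rfl
  parent_mem := fun _ hv => hv
  adj_parent := fun _ hv hroot => absurd (mem_singleton.1 hv) hroot
  depth_parent_lt := fun _ hv hroot => absurd (mem_singleton.1 hv) hroot

theorem exists_spanning_isMaxLeaf [Finite α] [Nonempty α]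
    (hconn : ∀ u v, Relation.ReflTransGen E u v) :
    ∃ T : OutTree E, (∀ v, v ∈ T.verts) ∧ T.IsMaxLeaf := by
  cases nonempty_fintype α
  have hbdd : BddAbove (Set.range fun T : OutTree E => #T.leaves) :=
    ⟨Fintype.card α, Set.forall_mem_range.2 fun T => card_le_univ _⟩
  have hne : (Set.range fun T : OutTree E => #T.leaves).Nonempty :=
    ⟨_, single E (Classical.arbitrary α), rfl⟩
  obtain ⟨_, ⟨T, rfl⟩, hT⟩ := hbdd.exists_isGreatest_of_nonempty hne
  obtain ⟨T', hspan, hle⟩ := exists_spanning_card_leaves_le hconn T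
  exact ⟨T', hspan, fun T'' => (hT ⟨T'', rfl⟩).trans hle⟩

end Spanning

section Switch

variable {T : OutTree E} {a f : ℕ → α} {φ : ℕ → ℕ} {m : ℕ}

theorem exists_card_switchLeaves_le_card_leaves {S : Finset ℕ}
    (ha : Set.InjOn a (Set.Icc 1 m)) (hnew : ∀ j ∈ Icc 1 m, a j ∉ T.verts)
    (hsucc : ∀ j ∈ Ico 1 m, E (a (j + 1)) (a j)) (hf : ∀ j ∈ Icc 1 m, E (f j) (a j))
    (hφ : ∀ j ∈ Icc 1 m, φ j = 0 ∧ f j ∈ T.verts ∨ 1 ≤ φ j ∧ φ j + 2 ≤ j ∧ f j = a (φ j))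
    (hS : S ⊆ Ico 1 m) (hsparse : ∀ j ∈ S, j + 1 ∉ S) :
    ∃ T' : OutTree E, #(switchLeaves m φ S) ≤ #T'.leaves := by
  have hS_succ {j : ℕ} (hj : j ∈ S) : j + 1 ∈ Icc 1 m :=
    mem_Icc.2 ⟨Nat.le_add_left 1 j, (mem_Ico.1 (hS hj)).2⟩
  have hφ_le {j : ℕ} (hj : j ∈ Icc 1 m) (hlt : φ j + 2 ≤ j) : φ j ≤ m :=
    ((Nat.le_add_right _ 2).trans hlt).trans (mem_Icc.1 hj).2
  let T' := T.graft (ι := Icc 1 m) (a := fun j => a j)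
    (g := fun j => S.piecewise (fun i => a (i + 1)) f j)
    (h := fun j => 2 * j.1 + if j.1 ∈ S then 3 else 0)
    (fun i j hij => Subtype.ext (ha (mem_Icc.1 i.2) (mem_Icc.1 j.2) hij))
    (fun j => hnew j j.2)
    (fun ⟨j, hj⟩ => by
      by_cases hjS : j ∈ S
      · refine .inr ⟨⟨j + 1, hS_succ hjS⟩, piecewise_eq_of_mem _ _ _ hjS, ?_⟩
        rw [if_pos hjS, if_neg (hsparse j hjS)]
        dsimp only
        omega
      · rw [piecewise_eq_of_notMem _ _ _ hjS, if_neg hjS]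
        refine (hφ j hj).imp And.right fun ⟨hpos, hlt, heq⟩ =>
          ⟨⟨φ j, mem_Icc.2 ⟨hpos, hφ_le hj hlt⟩⟩, heq, ?_⟩
        dsimp only
        split_ifs <;> omega)
    (fun ⟨j, hj⟩ => by
      by_cases hjS : j ∈ S
      · rw [piecewise_eq_of_mem _ _ _ hjS]
        exact hsucc j (hS hjS)
      · rw [piecewise_eq_of_notMem _ _ _ hjS]
        exact hf j hj)
  refine ⟨T', card_le_card_of_injOn a (fun x hx => ?_)
    (ha.mono fun x hx => mem_Icc.1 (mem_switchLeaves.1 hx).1)⟩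
  obtain ⟨hxm, hx⟩ := mem_switchLeaves.1 hx
  refine mem_leaves_graft (mem_verts_graft.2 (.inr ⟨⟨x, hxm⟩, rfl⟩)) (absurd · (hnew x hxm))
    fun ⟨j, hj⟩ hjx => hx j hj ?_
  by_cases hjS : j ∈ S
  · rw [piecewise_eq_of_mem _ _ _ hjS] at hjx ⊢
    exact ha (mem_Icc.1 (hS_succ hjS)) (mem_Icc.1 hxm) hjx
  · rw [piecewise_eq_of_notMem _ _ _ hjS] at hjx ⊢
    rcases hφ j hj with ⟨-, hold⟩ | ⟨hpos, hlt, heq⟩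
    · exact absurd (hjx ▸ hold) (hnew x hxm)
    · exact ha ⟨hpos, hφ_le hj hlt⟩ (mem_Icc.1 hxm) (heq.symm.trans hjx)

theorem exists_le_three_mul_card_leaves_add_one (T : OutTree E)
    (ha : Set.InjOn a (Set.Icc 1 m)) (hnew : ∀ j ∈ Icc 1 m, a j ∉ T.verts)
    (hsucc : ∀ j ∈ Ico 1 m, E (a (j + 1)) (a j))
    (hback : ∀ j ∈ Icc 1 m, ∃ u, E u (a j) ∧
      (u ∈ T.verts ∨ ∃ i, 1 ≤ i ∧ i + 2 ≤ j ∧ u = a i)) :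
    ∃ T' : OutTree E, m ≤ 3 * #T'.leaves + 1 := by
  have hindexed (j : ℕ) : ∃ u i, j ∈ Icc 1 m →
      E u (a j) ∧ (i = 0 ∧ u ∈ T.verts ∨ 1 ≤ i ∧ i + 2 ≤ j ∧ u = a i) := by
    by_cases hj : j ∈ Icc 1 m
    · obtain ⟨u, hu, huT | ⟨i, hi⟩⟩ := hback j hj
      · exact ⟨u, 0, fun _ => ⟨hu, .inl ⟨rfl, huT⟩⟩⟩
      · exact ⟨u, i, fun _ => ⟨hu, .inr hi⟩⟩
    · exact ⟨a j, 0, fun h => absurd h hj⟩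
  choose f φ hfφ using hindexed
  obtain ⟨S, hS, hsparse, hm⟩ := exists_sparse_le_card_switchLeaves (m := m) (φ := φ)
    fun j hj => by
      have hpos := (mem_Icc.1 hj).1
      have hφ := (hfφ j hj).2
      omega
  obtain ⟨T', hT'⟩ := exists_card_switchLeaves_le_card_leaves ha hnew hsucc
    (fun j hj => (hfφ j hj).1) (fun j hj => (hfφ j hj).2) hS hsparse
  exact ⟨T', by omega⟩

end Switch

section Rehang

variable {X : Finset α} {u v x : α}

/-- The out-tree obtained by making every vertex of `X` a child of `u`. -/
noncomputable def rehang (T : OutTree E) (hu : u ∈ T.verts) (hroot : T.root ∉ X)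
    (hE : ∀ x ∈ X, E u x) (hanc : ∀ x ∈ X, ¬T.IsAncestor x u) : OutTree E := by
  classical
  have hanc_u : ¬∃ x ∈ X, T.IsAncestor x u := fun ⟨x, hx, hxu⟩ => hanc x hx hxu
  exact
  { verts := T.verts
    root := T.root
    parent := X.piecewise (fun _ => u) T.parent
    depth := fun v => T.depth v + if ∃ x ∈ X, T.IsAncestor x v then T.depth u + 1 else 0
    root_mem := T.root_mem
    parent_root := by rw [piecewise_eq_of_notMem _ _ _ hroot, T.parent_root]
    parent_mem := fun v hv => by
      by_cases hvX : v ∈ X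
      · rwa [piecewise_eq_of_mem _ _ _ hvX]
      · rw [piecewise_eq_of_notMem _ _ _ hvX]
        exact T.parent_mem v hv
    adj_parent := fun v hv hvroot => by
      by_cases hvX : v ∈ X
      · rw [piecewise_eq_of_mem _ _ _ hvX]
        exact hE v hvX
      · rw [piecewise_eq_of_notMem _ _ _ hvX]
        exact T.adj_parent v hv hvroot
    depth_parent_lt := fun v hv hvroot => by
      by_cases hvX : v ∈ X
      · rw [piecewise_eq_of_mem _ _ _ hvX, if_neg hanc_u, if_pos ⟨v, hvX, isAncestor_refl v⟩]
        omega
      · have hiff : (∃ x ∈ X, T.IsAncestor x (T.parent v)) ↔ ∃ x ∈ X, T.IsAncestor x v :=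
          exists_congr fun x => and_congr_right fun hx =>
            ⟨IsAncestor.of_parent, (IsAncestor.parent_of_ne · (ne_of_mem_of_not_mem hx hvX).symm)⟩
        simp only [piecewise_eq_of_notMem _ _ _ hvX, hiff]
        exact Nat.add_lt_add_right (T.depth_parent_lt v hv hvroot) _ }

section

variable {T : OutTree E} {hu : u ∈ T.verts} {hroot : T.root ∉ X} {hE : ∀ x ∈ X, E u x}
  {hanc : ∀ x ∈ X, ¬T.IsAncestor x u}

theorem parent_rehang_of_mem (hv : v ∈ X) : (T.rehang hu hroot hE hanc).parent v = u :=
  if_pos hv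

theorem parent_rehang_of_notMem (hv : v ∉ X) :
    (T.rehang hu hroot hE hanc).parent v = T.parent v :=
  if_neg hv

end

/-- Replacing the in-neighbour of `x` by `u` yields an out-tree in which the previous in-neighbour
of `x` is a leaf. -/
structure Movable (T : OutTree E) (u x : α) : Prop where
  mem : u ∈ T.verts
  adj : E u x
  ne_parent : u ≠ T.parent x
  children_parent : T.children (T.parent x) = {x}
  not_isAncestor : ¬T.IsAncestor x u

variable {T : OutTree E}

theorem Movable.mem_and_ne_root (h : T.Movable u x) : x ∈ T.verts ∧ x ≠ T.root :=
  (mem_children.1 (h.children_parent ▸ mem_singleton_self x)).imp_right And.left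

theorem card_add_card_erase_le_card_leaves [DecidableEq α] (hT : T.IsMaxLeaf)
    (hX : ∀ x ∈ X, T.Movable u x) : #X + #(T.leaves.erase u) ≤ #T.leaves := by
  classical
  obtain rfl | ⟨y, hy⟩ := X.eq_empty_or_nonempty
  · rw [card_empty, zero_add]
    exact card_erase_le
  let T' := T.rehang (hX y hy).mem (fun h => (hX _ h).mem_and_ne_root.2 rfl)
    (fun x hx => (hX x hx).adj) fun x hx => (hX x hx).not_isAncestor
  have hchild {x c : α} (hx : x ∈ X) (hc : c ∈ T.verts) (hroot : c ≠ T.root)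
      (hcx : T.parent c = T.parent x) : c = x :=
    mem_singleton.1 ((hX x hx).children_parent ▸ mem_children.2 ⟨hc, hroot, hcx⟩)
  have hparent_inj : Set.InjOn T.parent X := fun x hx x' hx' h =>
    hchild hx' (hX x hx).mem_and_ne_root.1 (hX x hx).mem_and_ne_root.2 h
  have hdisj : Disjoint (X.image T.parent) (T.leaves.erase u) := by
    refine disjoint_left.2 fun v hv hleaf => ?_
    obtain ⟨x, hx, rfl⟩ := mem_image.1 hv
    obtain ⟨hxT, hroot⟩ := (hX x hx).mem_and_ne_root
    exact (mem_leaves.1 (mem_of_mem_erase hleaf)).2 x hxT hroot rfl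
  have hleaf_of {v : α} (hv : v ∈ T.verts) (huv : u ≠ v)
      (hold : ∀ c ∈ T.verts, c ≠ T.root → c ∉ X → T.parent c ≠ v) : v ∈ T'.leaves := by
    refine mem_leaves.2 ⟨hv, fun c hc hroot => ?_⟩
    by_cases hcX : c ∈ X
    · rwa [parent_rehang_of_mem hcX]
    · rw [parent_rehang_of_notMem hcX]
      exact hold c hc hroot hcX
  have hsub : X.image T.parent ∪ T.leaves.erase u ⊆ T'.leaves := by
    refine union_subset (image_subset_iff.2 fun x hx => ?_) fun v hv => ?_
    · exact hleaf_of (T.parent_mem x (hX x hx).mem_and_ne_root.1) (hX x hx).ne_parent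
        fun c hc hroot hcX hcx => hcX (hchild hx hc hroot hcx ▸ hx)
    · obtain ⟨hvu, hv⟩ := mem_erase.1 hv
      exact hleaf_of (leaves_subset_verts hv) hvu.symm fun c hc hroot _ =>
        (mem_leaves.1 hv).2 c hc hroot
  calc #X + #(T.leaves.erase u) = #(X.image T.parent ∪ T.leaves.erase u) := by
        rw [card_union_of_disjoint hdisj, card_image_of_injOn hparent_inj]
    _ ≤ #T'.leaves := card_le_card hsub
    _ ≤ #T.leaves := hT T'

open scoped Classical in
/-- The vertices `x` that are movable to some vertex `u`. -/
noncomputable def movable (T : OutTree E) : Finset α := {x ∈ T.verts | ∃ u, T.Movable u x}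

theorem mem_movable : x ∈ T.movable ↔ ∃ u, T.Movable u x := by
  simp only [movable, mem_filter, and_iff_right_iff_imp]
  exact fun ⟨u, hu⟩ => hu.mem_and_ne_root.1

theorem card_movable_le_card_leaves (hT : T.IsMaxLeaf) : #T.movable ≤ #T.leaves := by
  classical
  have hbound (u : α) : #{x ∈ T.movable | T.Movable u x} + #(T.leaves.erase u) ≤ #T.leaves :=
    card_add_card_erase_le_card_leaves hT fun x hx => (mem_filter.1 hx).2
  have hfiber (u : α) : #{x ∈ T.movable | T.Movable u x} ≤ 1 := by
    have := tsub_le_iff_right.1 (pred_card_le_card_erase (s := T.leaves) (a := u))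
    have := hbound u
    omega
  have hcover : T.movable ⊆ T.leaves.biUnion fun u => {x ∈ T.movable | T.Movable u x} := by
    intro x hx
    obtain ⟨u, hu⟩ := mem_movable.1 hx
    have hux : x ∈ ({x ∈ T.movable | T.Movable u x} : Finset α) := mem_filter.2 ⟨hx, hu⟩
    refine mem_biUnion.2 ⟨u, ?_, hux⟩
    by_contra hleaf
    have := hbound u
    rw [erase_eq_of_notMem hleaf] at this
    have := card_pos.2 ⟨x, hux⟩
    omega
  calc #T.movable ≤ #T.leaves * 1 :=
        (card_le_card hcover).trans (card_biUnion_le_card_mul _ _ _ fun u _ => hfiber u)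
    _ = #T.leaves := mul_one _

end Rehang

section Paths

/-- The endpoints and forbidden vertices of the paths into which the out-tree is cut: leaves,
branching vertices and movable vertices. -/
noncomputable def exceptional (T : OutTree E) : Finset α := by
  classical exact T.leaves ∪ T.branching ∪ T.movable

variable {T : OutTree E} {u v w x : α} {j : ℕ}

theorem notMem_exceptional :
    v ∉ T.exceptional ↔ v ∉ T.leaves ∧ v ∉ T.branching ∧ v ∉ T.movable := by
  classical
  simp only [exceptional, mem_union, not_or, and_assoc]

theorem card_exceptional_add_one_le (hT : T.IsMaxLeaf) :
    #T.exceptional + 1 ≤ 3 * #T.leaves := by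
  classical
  have hunion : #T.exceptional ≤ #T.leaves + #T.branching + #T.movable :=
    (card_union_le _ _).trans (Nat.add_le_add_right (card_union_le _ _) _)
  have hbranching := T.card_branching_add_one_le_card_leaves
  have hmovable := card_movable_le_card_leaves hT
  omega

theorem exists_iterate_parent_eq {C : Finset α} (hC : T.leaves ⊆ C) (hx : x ∈ T.verts) :
    ∃ w ∈ C, ∃ j, T.parent^[j] w = x ∧ (∀ i < j, T.parent^[i] w ≠ T.root) ∧
      ∀ i ∈ Icc 1 j, T.parent^[i] w ∉ C := by
  induction hd : T.verts.sup T.depth - T.depth x using Nat.strong_induction_on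
    generalizing x with
  | _ d ih =>
    by_cases hxC : x ∈ C
    · exact ⟨x, hxC, 0, rfl, by simp, by simp⟩
    obtain ⟨c, hc, hroot, rfl⟩ : ∃ c ∈ T.verts, c ≠ T.root ∧ T.parent c = x := by
      by_contra! hleaf
      exact hxC (hC (mem_leaves.2 ⟨hx, hleaf⟩))
    have hlt := T.depth_parent_lt c hc hroot
    have hle := le_sup (f := T.depth) hc
    obtain ⟨w, hw, j, rfl, hjroot, hjC⟩ := ih _ (by omega) hc rfl
    refine ⟨w, hw, j + 1, Function.iterate_succ_apply' .., fun i hi => ?_, fun i hi => ?_⟩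
    · obtain hi | rfl := (Nat.lt_succ_iff.1 hi).lt_or_eq
      exacts [hjroot i hi, hroot]
    · obtain ⟨hpos, hi⟩ := mem_Icc.1 hi
      obtain hi | rfl := hi.lt_or_eq
      · exact hjC i (mem_Icc.2 ⟨hpos, Nat.lt_succ_iff.1 hi⟩)
      · rwa [Function.iterate_succ_apply']

theorem IsAncestor.exists_mem_children (h : T.IsAncestor v u) (hu : u ∈ T.verts) (hne : u ≠ v) :
    ∃ c ∈ T.children v, T.IsAncestor c u := by
  obtain ⟨t, ht⟩ := h
  induction t with
  | zero => exact absurd ht hne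
  | succ t ih =>
    rw [Function.iterate_succ_apply'] at ht
    by_cases hroot : T.parent^[t] u = T.root
    · rw [hroot, T.parent_root] at ht
      exact ih (hroot.trans ht)
    · exact ⟨_, mem_children.2 ⟨iterate_parent_mem hu t, hroot, ht⟩, t, rfl⟩

theorem iterate_parent_mem_children (hw : w ∈ T.verts) (hroot : T.parent^[j] w ≠ T.root) :
    T.parent^[j] w ∈ T.children (T.parent^[j + 1] w) :=
  mem_children.2 ⟨iterate_parent_mem hw j, hroot, (Function.iterate_succ_apply' ..).symm⟩

theorem adj_iterate_parent (hw : w ∈ T.verts) (hroot : T.parent^[j] w ≠ T.root) :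
    E (T.parent^[j + 1] w) (T.parent^[j] w) := by
  rw [Function.iterate_succ_apply']
  exact T.adj_parent _ (iterate_parent_mem hw j) hroot

theorem isAncestor_or_exists_eq_iterate_parent (hw : w ∈ T.verts) (hu : u ∈ T.verts)
    (hroot : ∀ i < j, T.parent^[i] w ≠ T.root)
    (hbranching : ∀ i ∈ Icc 1 j, T.parent^[i] w ∉ T.branching)
    (hanc : T.IsAncestor (T.parent^[j] w) u) :
    T.IsAncestor w u ∨ ∃ i ∈ Icc 1 j, u = T.parent^[i] w := by
  induction j with
  | zero => exact .inl hanc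
  | succ j ih =>
    have hlast : j + 1 ∈ Icc 1 (j + 1) := right_mem_Icc.2 (Nat.le_add_left 1 j)
    by_cases hne : u = T.parent^[j + 1] w
    · exact .inr ⟨j + 1, hlast, hne⟩
    have hsub : Icc 1 j ⊆ Icc 1 (j + 1) := Icc_subset_Icc_right j.le_succ
    obtain ⟨c, hc, hcu⟩ := hanc.exists_mem_children hu hne
    obtain rfl := eq_of_mem_children_of_notMem_branching (hbranching _ hlast) hc
      (iterate_parent_mem_children hw (hroot j j.lt_succ_self))
    exact (ih (fun i hi => hroot i (hi.trans j.lt_succ_self)) (fun i hi => hbranching i (hsub hi))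
      hcu).imp_right fun ⟨i, hi, hui⟩ => ⟨i, hsub hi, hui⟩

theorem exists_adj_isAncestor_or_eq_iterate_parent (hspan : ∀ v, v ∈ T.verts)
    (hdeg : ∀ v b, E v b → ∀ a, ∃ u, E u v ∧ u ≠ v ∧ u ≠ b ∧ u ≠ a)
    (hroot : ∀ i < j, T.parent^[i] w ≠ T.root)
    (hexc : ∀ i ∈ Icc 1 j, T.parent^[i] w ∉ T.exceptional) {i : ℕ} (hi : i ∈ Ico 1 j) :
    ∃ u, E u (T.parent^[i] w) ∧
      (T.IsAncestor w u ∨ ∃ k, 1 ≤ k ∧ k + 2 ≤ i ∧ u = T.parent^[k] w) := by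
  have hbranching (k : ℕ) (hk : k ∈ Icc 1 j) : T.parent^[k] w ∉ T.branching :=
    (notMem_exceptional.1 (hexc k hk)).2.1
  obtain ⟨hpos, hij⟩ := mem_Ico.1 hi
  have hchild := iterate_parent_mem_children (hspan w) (hroot i hij)
  obtain ⟨i, rfl⟩ := Nat.exists_eq_add_of_le' hpos
  obtain ⟨u, hu, hu_self, hu_prev, hu_next⟩ := hdeg (T.parent^[i + 1] w) (T.parent^[i] w)
    (adj_iterate_parent (hspan w) (hroot i (by omega))) (T.parent^[i + 2] w)
  have hanc : T.IsAncestor (T.parent^[i + 1] w) u := by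
    by_contra hanc
    rw [Function.iterate_succ_apply' T.parent (i + 1)] at hu_next hchild
    refine (notMem_exceptional.1 (hexc (i + 1) (mem_Icc.2 ⟨hpos, hij.le⟩))).2.2
      (mem_movable.2 ⟨u, hspan u, hu, hu_next, ?_, hanc⟩)
    refine eq_singleton_iff_unique_mem.2 ⟨hchild, fun c hc => ?_⟩
    refine eq_of_mem_children_of_notMem_branching ?_ hc hchild
    rw [← Function.iterate_succ_apply' T.parent (i + 1)]
    exact hbranching (i + 2) (mem_Icc.2 ⟨by omega, hij⟩)
  refine ⟨u, hu, (isAncestor_or_exists_eq_iterate_parent (hspan w) (hspan u)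
    (fun k hk => hroot k (hk.trans hij))
    (fun k hk => hbranching k (Icc_subset_Icc_right hij.le hk)) hanc).imp_right ?_⟩
  rintro ⟨k, hk, rfl⟩
  obtain ⟨hkpos, hki⟩ := mem_Icc.1 hk
  have hk_self : k ≠ i + 1 := fun h => hu_self (h ▸ rfl)
  have hk_prev : k ≠ i := fun h => hu_prev (h ▸ rfl)
  exact ⟨k, hkpos, by omega, rfl⟩

theorem le_three_mul_card_leaves_add_two (hT : T.IsMaxLeaf) (hspan : ∀ v, v ∈ T.verts)
    (hdeg : ∀ v b, E v b → ∀ a, ∃ u, E u v ∧ u ≠ v ∧ u ≠ b ∧ u ≠ a)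
    (hroot : ∀ i < j, T.parent^[i] w ≠ T.root)
    (hexc : ∀ i ∈ Icc 1 j, T.parent^[i] w ∉ T.exceptional) : j ≤ 3 * #T.leaves + 2 := by
  have hanti := strictAntiOn_depth_iterate_parent (hspan w) hroot
  have hle {i : ℕ} (hi : i ∈ Set.Icc 1 (j - 1)) : i ∈ Set.Iic j := hi.2.trans (Nat.sub_le j 1)
  have hnew (i : ℕ) (hi : i ∈ Icc 1 (j - 1)) : T.parent^[i] w ∉ (T.subtree (hspan w)).verts :=
    fun hmem => (mem_verts_subtree.1 hmem).2.depth_le (hspan _) |>.not_gt <|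
      hanti (Nat.zero_le j) (hle (mem_Icc.1 hi)) (mem_Icc.1 hi).1
  have hsucc (i : ℕ) (hi : i ∈ Ico 1 (j - 1)) : E (T.parent^[i + 1] w) (T.parent^[i] w) :=
    adj_iterate_parent (hspan w) (hroot i (by have := (mem_Ico.1 hi).2; omega))
  obtain ⟨T', hT'⟩ := exists_le_three_mul_card_leaves_add_one (m := j - 1)
    (a := fun i => T.parent^[i] w) (T.subtree (hspan w))
    (fun i hi k hk hik => hanti.injOn (hle hi) (hle hk) (congrArg T.depth hik)) hnew hsucc
    fun i hi => by
      obtain ⟨hpos, hlt⟩ := mem_Icc.1 hi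
      simpa only [mem_verts_subtree, hspan, true_and] using
        exists_adj_isAncestor_or_eq_iterate_parent hspan hdeg hroot hexc
          (mem_Ico.2 ⟨hpos, by omega⟩)
  have hmax := hT T'
  omega

theorem card_le_card_exceptional_mul [Fintype α] (hT : T.IsMaxLeaf) (hspan : ∀ v, v ∈ T.verts)
    (hdeg : ∀ v b, E v b → ∀ a, ∃ u, E u v ∧ u ≠ v ∧ u ≠ b ∧ u ≠ a) :
    Fintype.card α ≤ #T.exceptional * (3 * #T.leaves + 3) := by
  classical
  have hleaves : T.leaves ⊆ T.exceptional := fun v hv => by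
    by_contra h
    exact (notMem_exceptional.1 h).1 hv
  have hcover : univ ⊆ T.exceptional.biUnion fun w =>
      (range (3 * #T.leaves + 3)).image fun j => T.parent^[j] w := fun x _ => by
    obtain ⟨w, hw, j, rfl, hroot, hexc⟩ := exists_iterate_parent_eq hleaves (hspan x)
    have hj := le_three_mul_card_leaves_add_two hT hspan hdeg hroot hexc
    exact mem_biUnion.2 ⟨w, hw, mem_image_of_mem _ (mem_range.2 (Nat.lt_succ_of_le hj))⟩
  exact (card_le_card hcover).trans (card_biUnion_le_card_mul _ _ _ fun w _ =>
    card_image_le.trans (card_range _).le)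

end Paths

theorem exists_spanning_card_le_twelve_mul_sq [Fintype α] [Nonempty α]
    (hconn : ∀ u v, Relation.ReflTransGen E u v)
    (hdeg : ∀ v b, E v b → ∀ a, ∃ u, E u v ∧ u ≠ v ∧ u ≠ b ∧ u ≠ a) :
    ∃ T : OutTree E, (∀ v, v ∈ T.verts) ∧ Fintype.card α ≤ 12 * #T.leaves ^ 2 := by
  obtain ⟨T, hspan, hT⟩ := exists_spanning_isMaxLeaf hconn
  obtain ⟨k, hk⟩ : ∃ k, #T.leaves = k + 1 :=
    Nat.exists_eq_add_of_le' (by have := T.card_branching_add_one_le_card_leaves; omega)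
  have hexc := card_exceptional_add_one_le hT
  refine ⟨T, hspan, (card_le_card_exceptional_mul hT hspan hdeg).trans ?_⟩
  rw [hk] at hexc ⊢
  calc #T.exceptional * (3 * (k + 1) + 3) ≤ (3 * k + 2) * (3 * (k + 1) + 3) :=
        Nat.mul_le_mul_right _ (by omega)
    _ ≤ 12 * (k + 1) ^ 2 := by nlinarith

end OutTree

namespace DirGraph

variable {V : Type} {D : DirGraph V}

/-- The arc relation of `D` on the type of its vertices. -/
def arcRel (D : DirGraph V) (u v : D.verts) : Prop := (u.1, v.1) ∈ D.arcs

theorem Reaches.reflTransGen_arcRel {u v : D.verts} (h : D.Reaches u v) :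
    Relation.ReflTransGen D.arcRel u v := by
  obtain ⟨l, ⟨hne, -, hmem, hchain⟩, hhead, hlast⟩ := h
  lift l to List D.verts using hmem
  have hne' : l ≠ [] := mt List.map_eq_nil_iff.2 hne
  have hhead' : l.head hne' = u := by
    rw [List.head?_map, List.head?_eq_some_head hne'] at hhead
    exact Subtype.ext (Option.some_injective _ hhead)
  have hlast' : l.getLast hne' = v := by
    rw [List.getLast?_map, List.getLast?_eq_some_getLast hne'] at hlast
    exact Subtype.ext (Option.some_injective _ hlast)
  rw [← hhead', ← hlast']
  exact List.relationReflTransGen_of_exists_isChain l ((List.isChain_map _).1 hchain) hne'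

/-- The subgraph of `D` whose vertices and arcs are those of the out-tree `T`. -/
def ofOutTree (T : OutTree D.arcRel) : DirGraph V where
  verts := Subtype.val '' (T.verts : Set D.verts)
  arcs := {a | ∃ v ∈ T.verts, v ≠ T.root ∧ a = ((T.parent v : V), (v : V))}

variable {T : OutTree D.arcRel}

theorem reaches_ofOutTree {v : D.verts} (hv : v ∈ T.verts) :
    (ofOutTree T).Reaches T.root v := by
  obtain ⟨t, ht, hroot⟩ := OutTree.exists_iterate_parent_eq_root hv
  have hanti := OutTree.strictAntiOn_depth_iterate_parent hv hroot
  refine ⟨((List.range (t + 1)).map fun i => ((T.parent^[i] v : D.verts) : V)).reverse,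
    ⟨by simp, ?_, ?_, ?_⟩, ?_, ?_⟩
  · refine List.nodup_reverse.2 (List.nodup_range.map_on fun i hi j hj hij => ?_)
    exact hanti.injOn (Nat.lt_succ_iff.1 (List.mem_range.1 hi))
      (Nat.lt_succ_iff.1 (List.mem_range.1 hj)) (congrArg T.depth (Subtype.ext hij))
  · intro x hx
    obtain ⟨i, -, rfl⟩ := List.mem_map.1 (List.mem_reverse.1 hx)
    exact ⟨_, OutTree.iterate_parent_mem hv i, rfl⟩
  · refine List.isChain_reverse.2 ((List.isChain_map _).2 ((List.isChain_range _ _).2 ?_))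
    exact fun i hi => ⟨_, OutTree.iterate_parent_mem hv i, hroot i hi,
      by rw [Nat.succ_eq_add_one, Function.iterate_succ_apply']⟩
  · simp [List.getLast?_range, ht]
  · simp [List.head?_range]

theorem inDeg_ofOutTree_root : (ofOutTree T).inDeg T.root = 0 := by
  have hempty : {a ∈ (ofOutTree T).arcs | a.2 = T.root} = ∅ := by
    refine Set.eq_empty_of_forall_notMem ?_
    rintro _ ⟨⟨v, -, hroot, rfl⟩, hv⟩
    exact hroot (Subtype.ext hv)
  rw [inDeg, hempty, Set.ncard_empty]

theorem inDeg_ofOutTree_of_ne_root {v : D.verts} (hv : v ∈ T.verts) (hroot : v ≠ T.root) :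
    (ofOutTree T).inDeg v = 1 := by
  have hsingleton : {a ∈ (ofOutTree T).arcs | a.2 = v} = {((T.parent v : V), (v : V))} := by
    refine Set.eq_singleton_iff_unique_mem.2 ⟨⟨⟨v, hv, hroot, rfl⟩, rfl⟩, ?_⟩
    rintro _ ⟨⟨w, -, -, rfl⟩, hw⟩
    rw [Subtype.ext hw]
  rw [inDeg, hsingleton, Set.ncard_singleton]

theorem isOutTreeOf_ofOutTree (T : OutTree D.arcRel) : (ofOutTree T).IsOutTreeOf D T.root where
  left :=
    { arcs_mem := by
        rintro _ ⟨v, hv, -, rfl⟩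
        exact ⟨⟨_, T.parent_mem v hv, rfl⟩, v, hv, rfl⟩
      root_mem := ⟨_, T.root_mem, rfl⟩
      root_indeg := inDeg_ofOutTree_root
      indeg_one := by
        rintro _ ⟨v, hv, rfl⟩ hroot
        exact inDeg_ofOutTree_of_ne_root hv (ne_of_apply_ne _ hroot)
      reach_root := by
        rintro _ ⟨v, hv, rfl⟩
        exact reaches_ofOutTree hv }
  right := by
    refine ⟨Subtype.coe_image_subset _ _, ?_⟩
    rintro _ ⟨v, hv, hroot, rfl⟩
    exact T.adj_parent v hv hroot

theorem card_leaves_le_ncard_leaves_ofOutTree (T : OutTree D.arcRel) :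
    T.leaves.card ≤ (ofOutTree T).leaves.ncard := by
  have hsub : Subtype.val '' (T.leaves : Set D.verts) ⊆ (ofOutTree T).leaves := by
    rintro _ ⟨v, hv, rfl⟩
    obtain ⟨hvT, hchildren⟩ := OutTree.mem_leaves.1 hv
    refine ⟨⟨v, hvT, rfl⟩, ?_⟩
    have hempty : {a ∈ (ofOutTree T).arcs | a.1 = v} = ∅ := by
      refine Set.eq_empty_of_forall_notMem ?_
      rintro _ ⟨⟨c, hc, hroot, rfl⟩, hcv⟩
      exact hchildren c hc hroot (Subtype.ext hcv)
    rw [outDeg, hempty, Set.ncard_empty]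
  have hfin : (ofOutTree T).leaves.Finite :=
    (T.verts.finite_toSet.image Subtype.val).subset (Set.sep_subset _ _)
  calc T.leaves.card = (Subtype.val '' (T.leaves : Set D.verts)).ncard := by
        rw [Set.ncard_image_of_injective _ Subtype.val_injective, Set.ncard_coe_finset]
    _ ≤ (ofOutTree T).leaves.ncard := Set.ncard_le_ncard hsub hfin

theorem ncard_leaves_le_ellS {T : DirGraph V} {r : V} (hfin : D.verts.Finite)
    (hT : IsOutBranching T D r) : T.leaves.ncard ≤ D.ellS := by
  refine le_csSup ⟨D.verts.ncard, ?_⟩ ⟨T, r, hT, rfl⟩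
  rintro _ ⟨T', r', ⟨-, hverts⟩, rfl⟩
  exact Set.ncard_le_ncard (hverts ▸ Set.sep_subset _ _) hfin

theorem card_leaves_le_ellS (hfin : D.verts.Finite) (hspan : ∀ v, v ∈ T.verts) :
    T.leaves.card ≤ D.ellS := by
  refine (card_leaves_le_ncard_leaves_ofOutTree T).trans
    (ncard_leaves_le_ellS hfin ⟨isOutTreeOf_ofOutTree T, ?_⟩)
  rw [ofOutTree, Set.eq_univ_of_forall (s := (T.verts : Set D.verts)) hspan,
    Subtype.coe_image_univ]

theorem exists_arc_notMem_of_card_lt_inDeg {v : V} {s : Finset V} (h : s.card < D.inDeg v) :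
    ∃ u ∉ s, (u, v) ∈ D.arcs := by
  have hlt : ((fun u => (u, v)) '' (s : Set V)).ncard < {a ∈ D.arcs | a.2 = v}.ncard :=
    ((Set.ncard_image_le s.finite_toSet).trans_eq (Set.ncard_coe_finset s)).trans_lt h
  obtain ⟨⟨u, _⟩, ⟨hu, rfl⟩, hus⟩ :=
    Set.exists_mem_notMem_of_ncard_lt_ncard hlt (s.finite_toSet.image _)
  exact ⟨u, fun hmem => hus ⟨u, hmem, rfl⟩, hu⟩

theorem exists_arc_ne_ne (hD : D.WellFormed)
    (hdeg : (∀ v ∈ D.verts, 3 ≤ D.inDeg v) ∨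
      ((∀ u v : V, (u, v) ∈ D.arcs → (v, u) ∉ D.arcs) ∧ ∀ v ∈ D.verts, 2 ≤ D.inDeg v))
    {v b : V} (hvb : (v, b) ∈ D.arcs) (a : V) : ∃ u, (u, v) ∈ D.arcs ∧ u ≠ b ∧ u ≠ a := by
  classical
  have hv := (hD _ hvb).1
  rcases hdeg with hthree | ⟨horiented, htwo⟩
  · obtain ⟨u, hu, huv⟩ := exists_arc_notMem_of_card_lt_inDeg (s := {b, a})
      (Finset.card_le_two.trans_lt (hthree v hv))
    simp only [Finset.mem_insert, Finset.mem_singleton, not_or] at hu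
    exact ⟨u, huv, hu⟩
  · obtain ⟨u, hu, huv⟩ := exists_arc_notMem_of_card_lt_inDeg (s := {a})
      ((Finset.card_singleton a).trans_lt (htwo v hv))
    refine ⟨u, huv, ?_, Finset.notMem_singleton.1 hu⟩
    rintro rfl
    exact horiented _ _ hvb huv

theorem ellS_ge_quarter_sqrt_of_strongly_connected_general (hfin : D.verts.Finite)
    (hconn : ∀ u ∈ D.verts, ∀ v ∈ D.verts, D.Reaches u v)
    (hdeg : ∀ v ∈ D.verts, ∀ b ∈ D.verts, (v, b) ∈ D.arcs → ∀ a ∈ D.verts,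
      ∃ u ∈ D.verts, (u, v) ∈ D.arcs ∧ u ≠ v ∧ u ≠ b ∧ u ≠ a) :
    D.verts.ncard ≤ 12 * D.ellS ^ 2 := by
  obtain hempty | hne := D.verts.eq_empty_or_nonempty
  · rw [hempty, Set.ncard_empty]
    exact Nat.zero_le _
  have := hne.to_subtype
  have := hfin.fintype
  obtain ⟨T, hspan, hcard⟩ := OutTree.exists_spanning_card_le_twelve_mul_sq (E := D.arcRel)
    (fun u v => (hconn u u.2 v v.2).reflTransGen_arcRel)
    fun v b hvb a => by
      obtain ⟨u, hu, huv, hne⟩ := hdeg v v.2 b b.2 hvb a a.2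
      exact ⟨⟨u, hu⟩, huv, by simpa only [ne_eq, Subtype.ext_iff] using hne⟩
  calc D.verts.ncard = Fintype.card D.verts := by
        rw [← Nat.card_coe_set_eq, Nat.card_eq_fintype_card]
    _ ≤ 12 * T.leaves.card ^ 2 := hcard
    _ ≤ 12 * D.ellS ^ 2 :=
        Nat.mul_le_mul_left _ (Nat.pow_le_pow_left (card_leaves_le_ellS hfin hspan) 2)

theorem ellS_ge_quarter_sqrt_of_strongly_connected {V : Type} [Fintype V]
    (D : DirGraph V) (n : ℕ) (hD : D.WellFormed) (hn : D.verts.ncard = n)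
    (hconn : ∀ u ∈ D.verts, ∀ v ∈ D.verts, D.Reaches u v)
    (hdeg : (∀ v ∈ D.verts, 3 ≤ D.inDeg v) ∨
      ((∀ u v : V, (u, v) ∈ D.arcs → (v, u) ∉ D.arcs) ∧
        ∀ v ∈ D.verts, 2 ≤ D.inDeg v)) :
    (1 / 4 : ℝ) * Real.sqrt n ≤ (ellS D : ℝ) := by
  have hcard := ellS_ge_quarter_sqrt_of_strongly_connected_general D.verts.toFinite hconn
    fun v _ b _ hvb a _ => by
      obtain ⟨u, huv, hne⟩ := exists_arc_ne_ne hD hdeg hvb a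
      exact ⟨u, (hD _ huv).1, huv, (hD _ huv).2.2, hne⟩
  rw [hn] at hcard
  have hsq : (n : ℝ) ≤ (4 * D.ellS) ^ 2 := by exact_mod_cast hcard.trans (by nlinarith)
  linarith [Real.sqrt_le_iff.2 ⟨by positivity, hsq⟩]

end DirGraph
end
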